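/- arXiv:2010.12564 — 3 statements merged into one kernel-verified Lean document; each statement's English description precedes it below -/
import Mathlib

section
/- Let (R, m) be a d-dimensional complete Noetherian local domain of prime characteristic p with absolute integral closure R^+, let x_1, …, x_d be a system of parameters of R, let Λ be a set of indeterminates, and let T = R^+(t_λ : λ ∈ Λ). Then for every 1 ≤ n ≤ d, the sequence x_1, …, x_n is a regular sequence on T. -/
open IsLocalRing TensorProduct
set_option synthInstance.maxHeartbeats 1000000
set_option maxHeartbeats 1000000

/-- The absolute integral closure `R⁺` of a domain `R`: the integral closure of `R`
in an algebraic closure of its fraction field. -/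
noncomputable abbrev RPlus (R : Type) [CommRing R] [IsDomain R] : Type :=
  ↥(integralClosure R (AlgebraicClosure (FractionRing R)))

/-- A system of parameters of a local ring: `d` elements generating an ideal whose
radical is the maximal ideal, where `d` is the Krull dimension. -/
def IsSOP (R : Type) [CommRing R] [IsLocalRing R] {d : ℕ} (x : Fin d → R) : Prop :=
  ringKrullDim R = d ∧ (Ideal.span (Set.range x)).radical = maximalIdeal R

/-- `T = R⁺(t_λ : λ ∈ Λ)`: the localization of the polynomial ring `R⁺[t_λ : λ ∈ Λ]`
at the prime ideal generated by the maximal ideal of the quasilocal ring `R⁺`. -/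
noncomputable abbrev TRing (R : Type) [CommRing R] [IsDomain R] (Λ : Type)
    [IsLocalRing (RPlus R)]
    [hP : (Ideal.map (MvPolynomial.C (σ := Λ)) (maximalIdeal (RPlus R))).IsPrime] : Type :=
  Localization.AtPrime (Ideal.map (MvPolynomial.C (σ := Λ)) (maximalIdeal (RPlus R)))

/-- The canonical map `R⁺ → T`. -/
noncomputable def plusToT (R : Type) [CommRing R] [IsDomain R] (Λ : Type)
    [IsLocalRing (RPlus R)]
    [hP : (Ideal.map (MvPolynomial.C (σ := Λ)) (maximalIdeal (RPlus R))).IsPrime] :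
    RPlus R →+* TRing R Λ :=
  (algebraMap (MvPolynomial Λ (RPlus R)) (TRing R Λ)).comp MvPolynomial.C

/-- The canonical map `R → T`. -/
noncomputable def toT (R : Type) [CommRing R] [IsDomain R] (Λ : Type)
    [IsLocalRing (RPlus R)]
    [hP : (Ideal.map (MvPolynomial.C (σ := Λ)) (maximalIdeal (RPlus R))).IsPrime] :
    R →+* TRing R Λ :=
  (plusToT R Λ).comp (algebraMap R (RPlus R))

section HHPartE
theorem hh_equational {M L ι : Type} [CommRing M] [IsDomain M] [Field L] [Algebra M L]
    [IsIntegrallyClosedIn M L] (p : ℕ) [Fact p.Prime] [CharP M p]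
    (hroot : ∀ f : Polynomial M, f.Monic → f.natDegree ≠ 0 → ∃ t, f.eval t = 0)
    (S : Finset ι) (hS : S.Nonempty) (y : ι → M) (hy : ∀ l ∈ S, y l ≠ 0)
    (r : M) (E : ℕ) (a : ℕ → M) (s : ι → M)
    (h : r ^ p ^ E - ∑ i ∈ Finset.range E, a i * (∏ l ∈ S, y l) ^ (p ^ E - p ^ i) * r ^ p ^ i
      = ∑ l ∈ S, y l ^ p ^ E * s l) :
    ∃ z : ι → M, r = ∑ l ∈ S, y l * z l := by
  classical
  have hp1 : 1 < p := (Fact.out : p.Prime).one_lt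
  have hlt : ∀ i ∈ Finset.range E, p ^ i < p ^ E := fun i hi =>
    Nat.pow_lt_pow_right hp1 (Finset.mem_range.mp hi)
  have hinj : Function.Injective (algebraMap M L) :=
    IsIntegralClosure.algebraMap_injective M M L
  have hex : ExpChar M p := ExpChar.prime Fact.out
  -- general monic polynomial
  have hmon : ∀ (b : ℕ → M) (c : M), 
      (Polynomial.X ^ p ^ E - (∑ i ∈ Finset.range E, Polynomial.C (b i) * Polynomial.X ^ p ^ i
        + Polynomial.C c)).Monic ∧ (Polynomial.X ^ p ^ E - (∑ i ∈ Finset.range E, Polynomial.C (b i) * Polynomial.X ^ p ^ i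
        + Polynomial.C c)).natDegree = p ^ E := by
    intro b c
    have hd : (∑ i ∈ Finset.range E, Polynomial.C (b i) * Polynomial.X ^ p ^ i
        + Polynomial.C c).degree < ((p ^ E : ℕ) : WithBot ℕ) := by
      refine (Polynomial.degree_add_le _ _).trans_lt (max_lt ?_ ?_)
      · refine (Polynomial.degree_sum_le _ _).trans_lt ?_
        rw [Finset.sup_lt_iff (by exact WithBot.bot_lt_coe _)]
        intro i hi
        refine (Polynomial.degree_C_mul_X_pow_le _ _).trans_lt ?_
        exact_mod_cast hlt i hi
      · refine Polynomial.degree_C_le.trans_lt ?_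
        exact_mod_cast pow_pos (by omega) E
    refine ⟨(Polynomial.monic_X_pow _).sub_of_left (by rwa [Polynomial.degree_X_pow]), ?_⟩
    refine Polynomial.natDegree_eq_of_degree_eq_some ?_
    rw [Polynomial.degree_sub_eq_left_of_degree_lt (by rwa [Polynomial.degree_X_pow]),
      Polynomial.degree_X_pow]
  have hE0 : p ^ E ≠ 0 := pow_ne_zero _ (by omega)
  -- solve for t_l
  have hsolve : ∀ (l : ι), ∃ t : M,
      t ^ p ^ E - ∑ i ∈ Finset.range E,
        a i * (∏ l' ∈ S.erase l, y l') ^ (p ^ E - p ^ i) * t ^ p ^ i = s l := by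
    intro l
    obtain ⟨t, ht⟩ := hroot _ (hmon (fun i => a i * (∏ l' ∈ S.erase l, y l') ^ (p ^ E - p ^ i)) (s l)).1
      (by rw [(hmon _ _).2]; exact hE0)
    refine ⟨t, ?_⟩
    simp only [Polynomial.eval_sub, Polynomial.eval_add, Polynomial.eval_pow, Polynomial.eval_X,
      Polynomial.eval_finsetSum, Polynomial.eval_mul, Polynomial.eval_C] at ht
    linear_combination ht
  choose t ht using hsolve
  set Y := ∏ l ∈ S, y l with hY
  have hY0 : Y ≠ 0 := Finset.prod_ne_zero_iff.mpr hy
  -- g additive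
  set u := r - ∑ l ∈ S, y l * t l with hu
  have hpow : ∀ (i : ℕ), u ^ p ^ i = r ^ p ^ i - ∑ l ∈ S, (y l * t l) ^ p ^ i := by
    intro i
    rw [hu, sub_pow_expChar_pow, sum_pow_char_pow]
  have hg : u ^ p ^ E = ∑ i ∈ Finset.range E, a i * Y ^ (p ^ E - p ^ i) * u ^ p ^ i := by
    have h2 : ∀ l ∈ S, y l ^ p ^ E * s l = (y l * t l) ^ p ^ E - ∑ i ∈ Finset.range E,
        a i * Y ^ (p ^ E - p ^ i) * (y l * t l) ^ p ^ i := by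
      intro l hl
      rw [← ht l, mul_sub, Finset.mul_sum, mul_pow]
      congr 1
      refine Finset.sum_congr rfl fun i hi => ?_
      have hYl : Y = y l * ∏ l' ∈ S.erase l, y l' := (Finset.mul_prod_erase S y hl).symm
      have hpe : p ^ E = (p ^ E - p ^ i) + p ^ i := by have := hlt i hi; omega
      rw [hYl, mul_pow, mul_pow]
      nth_rewrite 1 [hpe]
      rw [pow_add]
      ring
    rw [Finset.sum_congr rfl h2, Finset.sum_sub_distrib, Finset.sum_comm] at h
    simp only [hpow, mul_sub, Finset.sum_sub_distrib, Finset.mul_sum] at h ⊢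
    linear_combination h
  -- v = u / Y
  have hYL : algebraMap M L Y ≠ 0 := by
    rwa [Ne, map_eq_zero_iff _ hinj]
  have hv : IsIntegral M (algebraMap M L u / algebraMap M L Y) := by
    refine ⟨_, (hmon a 0).1, ?_⟩
    simp only [Polynomial.eval₂_sub, Polynomial.eval₂_add, Polynomial.eval₂_pow, Polynomial.eval₂_X,
      Polynomial.eval₂_finsetSum, Polynomial.eval₂_mul, Polynomial.eval₂_C, map_zero, add_zero]
    have := congrArg (algebraMap M L) hg
    simp only [map_pow, map_sum, map_mul] at this
    rw [div_pow, this, Finset.sum_div, sub_eq_zero]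
    refine Finset.sum_congr rfl fun i hi => ?_
    have hpe : p ^ E = (p ^ E - p ^ i) + p ^ i := by have := hlt i hi; omega
    nth_rewrite 2 [hpe]
    rw [div_pow, pow_add]
    field_simp
  obtain ⟨v, hv⟩ := IsIntegrallyClosedIn.isIntegral_iff.mp hv
  have huv : u = Y * v := by
    apply hinj
    rw [map_mul, hv]; field_simp
  obtain ⟨l0, hl0⟩ := hS
  refine ⟨fun l => t l + if l = l0 then (∏ l' ∈ S.erase l0, y l') * v else 0, ?_⟩
  simp only [mul_add, Finset.sum_add_distrib, mul_ite, mul_zero, Finset.sum_ite_eq', hl0, if_true]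
  have hYl : Y = y l0 * ∏ l' ∈ S.erase l0, y l' := (Finset.mul_prod_erase S y hl0).symm
  rw [← mul_assoc, ← hYl, ← huv, hu]; ring

end HHPartE

section HHPartC
/-- power-regularity -/
def HHPR {A ι : Type} [CommRing A] (y : ι → A) : Prop :=
  ∀ (S : Finset ι) (j : ι), j ∉ S → ∀ (n : ι → ℕ), (∀ l, 1 ≤ n l) → ∀ (c : ℕ) (f : A),
    (∃ g : ι → A, y j ^ c * f = ∑ l ∈ S, y l ^ n l * g l) → ∃ g : ι → A, f = ∑ l ∈ S, y l ^ n l * g l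

/-- membership -/
def HHMem {A M ι : Type} [CommRing A] [AddCommGroup M] [Module A M] (y : ι → A) (n : ι → ℕ)
    (S : Finset ι) (w : M) : Prop := ∃ z : ι → M, w = ∑ l ∈ S, y l ^ n l • z l

/-- factorization through free modules up to powers -/
def HHJ {A M ι : Type} [CommRing A] [AddCommGroup M] [Module A M] (y : ι → A) : Prop :=
  ∀ (V : Submodule A M), V.FG → ∀ l : ι, ∃ (N k : ℕ) (φ : V →ₗ[A] (Fin k → A))
    (ψ : (Fin k → A) →ₗ[A] M), ∀ v : V, ψ (φ v) = y l ^ N • (v : M)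

section
variable {A M ι : Type} [CommRing A] [AddCommGroup M] [Module A M] {y : ι → A} {n : ι → ℕ}
    {S : Finset ι}

theorem HHMem.add {v w : M} (hv : HHMem y n S v) (hw : HHMem y n S w) : HHMem y n S (v + w) := by
  obtain ⟨z, rfl⟩ := hv
  obtain ⟨z', rfl⟩ := hw
  exact ⟨fun l => z l + z' l, by simp [Finset.sum_add_distrib]⟩

theorem HHMem.smul {w : M} (a : A) (hw : HHMem y n S w) : HHMem y n S (a • w) := by
  obtain ⟨z', rfl⟩ := hw
  exact ⟨fun l => a • z' l, by rw [Finset.smul_sum]; exact Finset.sum_congr rfl fun l _ => smul_comm _ _ _⟩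

theorem HHMem.sub {v w : M} (hv : HHMem y n S v) (hw : HHMem y n S w) : HHMem y n S (v - w) := by
  rw [sub_eq_add_neg, ← neg_one_smul A w]
  exact hv.add (hw.smul _)

theorem HHMem.zero : HHMem y n S (0 : M) := ⟨fun _ => 0, by simp⟩

theorem HHMem.sum {κ : Type} (s : Finset κ) {w : κ → M} (h : ∀ i ∈ s, HHMem y n S (w i)) :
    HHMem y n S (∑ i ∈ s, w i) := by
  classical
  induction s using Finset.induction_on with
  | empty => simpa using HHMem.zero
  | insert i s hi ih =>
    rw [Finset.sum_insert hi]
    exact (h i (by simp)).add (ih fun i hi => h i (by simp [hi]))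

theorem HHMem.single {l : ι} (hl : l ∈ S) (w : M) : HHMem y n S (y l ^ n l • w) := by
  classical
  exact ⟨fun l' => if l' = l then w else 0, by simp [hl]⟩

theorem HHMem.trans {n' : ι → ℕ} {S' : Finset ι} {w : M} (a : A) (hw : HHMem y n S w)
    (h : ∀ l ∈ S, l ∈ S' ∧ ∃ b, a * y l ^ n l = y l ^ n' l * b) : HHMem y n' S' (a • w) := by
  obtain ⟨z, rfl⟩ := hw
  rw [Finset.smul_sum]
  refine HHMem.sum _ fun l hl => ?_
  obtain ⟨h1, b, h2⟩ := h l hl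
  rw [smul_smul, h2, mul_smul]
  exact HHMem.single h1 _

theorem HHMem.map {M' : Type} [AddCommGroup M'] [Module A M'] (ψ : M →ₗ[A] M') {w : M}
    (hw : HHMem y n S w) : HHMem y n S (ψ w) := by
  obtain ⟨z, rfl⟩ := hw
  exact ⟨fun l => ψ (z l), by simp⟩

theorem HHPR.free (h : HHPR y) {j : ι} (hj : j ∉ S) (hn : ∀ l, 1 ≤ n l) (c : ℕ) {k : ℕ}
    (f : Fin k → A) (hf : HHMem y n S (y j ^ c • f)) : HHMem y n S f := by
  obtain ⟨z, hz⟩ := hf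
  have : ∀ i, ∃ g : ι → A, f i = ∑ l ∈ S, y l ^ n l * g l := by
    intro i
    refine h S j hj n hn c (f i) ⟨fun l => z l i, ?_⟩
    have := congrFun hz i
    simpa using this
  choose g hg using this
  refine ⟨fun l i => g i l, ?_⟩
  ext i
  simp [hg i]

theorem HHPR.pow (h : HHPR y) (m : ι → ℕ) (hm : ∀ l, 1 ≤ m l) : HHPR (fun l => y l ^ m l) := by
  intro S j hj n hn c f ⟨g, hg⟩
  have := h S j hj (fun l => m l * n l) (fun l => Nat.mul_pos (hm l) (hn l)) (m j * c) f ⟨g, by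
    simpa [pow_mul] using hg⟩
  simpa [pow_mul] using this

theorem HHJ.pow (h : HHJ (M := M) y) (m : ι → ℕ) (hm : ∀ l, 1 ≤ m l) :
    HHJ (M := M) (fun l => y l ^ m l) := by
  intro V hV l
  obtain ⟨N, k, φ, ψ, hh⟩ := h V hV l
  refine ⟨N, k, φ, (y l ^ (m l * N - N)) • ψ, fun v => ?_⟩
  rw [LinearMap.smul_apply, hh, smul_smul, ← pow_add, ← pow_mul]
  congr 2
  have := Nat.le_mul_of_pos_left N (hm l)
  omega

theorem hh_step [DecidableEq ι] (hPR : HHPR y) (hJ : HHJ (M := M) y) {l0 j : ι} (hl0 : l0 ∈ S)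
    (hj : j ∉ S)
    (IH : ∀ l', l' ∉ S.erase l0 → ∀ n : ι → ℕ, (∀ l, 1 ≤ n l) → ∀ (c : ℕ) (r : M),
      HHMem y n (S.erase l0) (y l' ^ c • r) → HHMem y n (S.erase l0) r)
    (V : Submodule A M) (hV : V.FG) :
    ∃ N, 1 ≤ N ∧ ∃ V' : Submodule A M, V'.FG ∧ V ≤ V' ∧
      ∀ (n : ι → ℕ), (∀ l, 1 ≤ n l) → N ≤ n l0 → ∀ (c : ℕ) (w : M), w ∈ V →
        (∃ z : ι → M, (∀ l, z l ∈ V) ∧ y j ^ c • w = ∑ l ∈ S, y l ^ n l • z l) →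
        ∃ w' ∈ V', HHMem y n (S.erase l0) (w - y l0 ^ (n l0 - N) • w') ∧
          ∃ z : ι → M, (∀ l, z l ∈ V') ∧
            y j ^ c • w' = ∑ l ∈ S, y l ^ (Function.update n l0 N l) • z l := by
  obtain ⟨N₀, k, φ, ψ₀, hψ₀⟩ := hJ V hV l0
  obtain ⟨N, hN1, ψ, hψ⟩ : ∃ N, 1 ≤ N ∧ ∃ ψ : (Fin k → A) →ₗ[A] M,
      ∀ v : V, ψ (φ v) = y l0 ^ N • (v : M) := by
    refine ⟨N₀ + 1, by omega, y l0 • ψ₀, fun v => ?_⟩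
    rw [LinearMap.smul_apply, hψ₀, smul_smul, pow_succ']
  refine ⟨N, hN1, V ⊔ LinearMap.range ψ, hV.sup ?_, le_sup_left, ?_⟩
  · rw [LinearMap.range_eq_map]; exact (Module.Finite.fg_top).map _
  intro n hn hNn c w hw ⟨z, hzV, hz⟩
  have key : y j ^ c • φ ⟨w, hw⟩ = ∑ l ∈ S, y l ^ n l • φ ⟨z l, hzV l⟩ := by
    rw [← map_smul]
    simp_rw [← map_smul]
    rw [← map_sum]
    congr 1
    ext
    simpa using hz
  obtain ⟨f, hf⟩ := hPR.free hj hn c (φ ⟨w, hw⟩) ⟨_, key⟩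
  refine ⟨ψ (f l0), Submodule.mem_sup_right ⟨_, rfl⟩, ?_, ?_⟩
  · refine IH l0 (by simp) n hn N _ ⟨fun l => ψ (f l), ?_⟩
    rw [smul_sub, smul_smul, ← pow_add, Nat.add_sub_cancel' hNn, ← hψ ⟨w, hw⟩, hf, map_sum,
      ← Finset.add_sum_erase S _ hl0]
    simp
  · have h1 : HHMem y n (S.erase l0) (y l0 ^ n l0 • (y j ^ c • f l0 - φ ⟨z l0, hzV l0⟩)) := by
      refine ⟨fun l => - (y j ^ c • f l - φ ⟨z l, hzV l⟩), ?_⟩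
      rw [hf] at key
      rw [Finset.smul_sum, ← Finset.add_sum_erase S _ hl0,
        ← Finset.add_sum_erase S (fun l => y l ^ n l • φ ⟨z l, hzV l⟩) hl0] at key
      simp only [smul_neg, smul_sub, Finset.sum_neg_distrib, Finset.sum_sub_distrib]
      simp only [smul_comm (y j ^ c)] at key ⊢
      rw [sub_eq_iff_eq_add, neg_sub, ← sub_eq_iff_eq_add.mpr (add_comm _ _ |>.trans key.symm).symm]
      abel
    obtain ⟨g, hg⟩ := hPR.free (by simp) hn _ _ h1
    refine ⟨fun l => if l = l0 then z l0 else ψ (g l), ?_, ?_⟩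
    · intro l
      dsimp only
      split_ifs
      · exact Submodule.mem_sup_left (hzV _)
      · exact Submodule.mem_sup_right ⟨_, rfl⟩
    · rw [← Finset.add_sum_erase S _ hl0]
      have h2 : ∀ l ∈ S.erase l0, y l ^ (Function.update n l0 N l) •
          (if l = l0 then z l0 else ψ (g l)) = ψ (y l ^ n l • g l) := by
        intro l hl
        have := Finset.ne_of_mem_erase hl
        simp [this]
      rw [Finset.sum_congr rfl h2, ← map_sum, ← hg, map_sub, hψ]
      simp

theorem hh_iter [DecidableEq ι] (hPR : HHPR y) (hJ : HHJ (M := M) y) {j : ι}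
    (hj : j ∉ S)
    (IH : ∀ l0 ∈ S, ∀ l', l' ∉ S.erase l0 → ∀ n : ι → ℕ, (∀ l, 1 ≤ n l) → ∀ (c : ℕ) (r : M),
      HHMem y n (S.erase l0) (y l' ^ c • r) → HHMem y n (S.erase l0) r)
    (V : Submodule A M) (hV : V.FG) (U : Finset ι) (hU : U ⊆ S) :
    ∃ N : ι → ℕ, (∀ l, 1 ≤ N l) ∧ ∃ V' : Submodule A M, V'.FG ∧ V ≤ V' ∧
      ∀ (q : ℕ), (∀ l ∈ U, N l ≤ q) → 1 ≤ q → ∀ (c : ℕ) (w : M), w ∈ V →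
        (∃ z : ι → M, (∀ l, z l ∈ V) ∧ y j ^ c • w = ∑ l ∈ S, y l ^ q • z l) →
        ∃ w' ∈ V', HHMem y (fun _ => q) S (w - (∏ l ∈ U, y l ^ (q - N l)) • w') ∧
          ∃ z : ι → M, (∀ l, z l ∈ V') ∧
            y j ^ c • w' = ∑ l ∈ S, y l ^ (if l ∈ U then N l else q) • z l := by
  induction U using Finset.induction_on with
  | empty =>
    refine ⟨fun _ => 1, fun _ => le_rfl, V, hV, le_rfl, fun q _ _ c w hw hz => ⟨w, hw, ?_, ?_⟩⟩
    · simpa using HHMem.zero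
    · simpa using hz
  | insert l0 U hl0 ih =>
    obtain ⟨N, hN, V', hV', hVV', h⟩ := ih ((Finset.subset_insert _ _).trans hU)
    have hl0S : l0 ∈ S := hU (by simp)
    obtain ⟨N0, hN0, V'', hV'', hVV'', h'⟩ := hh_step hPR hJ hl0S hj (IH l0 hl0S) V' hV'
    refine ⟨Function.update N l0 N0, fun l => ?_, V'', hV'', hVV'.trans hVV'', ?_⟩
    · by_cases hl : l = l0
      · subst hl; simpa using hN0
      · simpa [hl] using hN l
    intro q hq hq1 c w hw hz
    have hne : ∀ l ∈ U, l ≠ l0 := fun l hl h => hl0 (h ▸ hl)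
    have hqU : ∀ l ∈ U, N l ≤ q := fun l hl => by
      have := hq l (by simp [hl])
      simpa [hne l hl] using this
    obtain ⟨w', hw', hm, hz'⟩ := h q hqU hq1 c w hw hz
    have hq0 : N0 ≤ q := by simpa using hq l0 (by simp)
    obtain ⟨w'', hw'', hm', hz''⟩ := h' (fun l => if l ∈ U then N l else q)
      (fun l => by by_cases hl : l ∈ U <;> simp only [hl, if_true, if_false]; exacts [hN l, hq1]) (by simpa [hl0] using hq0) c w' hw' hz'
    refine ⟨w'', hw'', ?_, ?_⟩
    · rw [Finset.prod_insert hl0]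
      have hp : ∏ l ∈ U, y l ^ (q - Function.update N l0 N0 l) = ∏ l ∈ U, y l ^ (q - N l) :=
        Finset.prod_congr rfl fun l hl => by simp [hne l hl]
      rw [hp]
      simp only [hl0, if_false, Function.update_self] at hm' ⊢
      have := hm.add (hm'.trans (n' := fun _ => q) (S' := S) (∏ l ∈ U, y l ^ (q - N l)) ?_)
      · convert this using 1
        rw [smul_sub, smul_smul, mul_comm]
        abel
      · intro l hl
        refine ⟨Finset.mem_of_mem_erase hl, ?_⟩
        by_cases hlU : l ∈ U
        · refine ⟨∏ l' ∈ U.erase l, y l' ^ (q - N l'), ?_⟩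
          rw [← Finset.mul_prod_erase U _ hlU]
          simp only [hlU, if_true]
          have h5 : y l ^ q = y l ^ (q - N l) * y l ^ N l := by
            rw [← pow_add, Nat.sub_add_cancel (hqU l hlU)]
          rw [h5]
          ring
        · exact ⟨_, by simp only [hlU, if_false]; rw [mul_comm]⟩
    · obtain ⟨z, hz1, hz2⟩ := hz''
      refine ⟨z, hz1, hz2.trans (Finset.sum_congr rfl fun l hl => ?_)⟩
      congr 2
      by_cases hll : l = l0
      · subst hll; simp
      · simp [hll]
end

theorem hh_claim_core {A M L ι : Type} [CommRing A] [IsNoetherianRing A] [CommRing M] [IsDomain M] [Field L] 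
    [Algebra A M] [Algebra M L] [DecidableEq ι] [Algebra.IsIntegral A M]
    [IsIntegrallyClosedIn M L] (p : ℕ) [Fact p.Prime] [CharP M p]
    (hroot : ∀ f : Polynomial M, f.Monic → f.natDegree ≠ 0 → ∃ t, f.eval t = 0)
    (S : Finset ι) (hS : S.Nonempty) (y : ι → A) (hy : ∀ l ∈ S, algebraMap A M (y l) ≠ 0)
    (hPR : HHPR y) (hJ : HHJ (M := M) y) {j : ι}
    (hj : j ∉ S)
    (IH : ∀ l0 ∈ S, ∀ l', l' ∉ S.erase l0 → ∀ n : ι → ℕ, (∀ l, 1 ≤ n l) → ∀ (c : ℕ) (r : M),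
      HHMem y n (S.erase l0) (y l' ^ c • r) → HHMem y n (S.erase l0) r) (r : M)
    (hr : HHMem y (fun _ => 1) S (y j • r)) : HHMem y (fun _ => 1) S r := by
  have hp1 : 1 < p := (Fact.out : p.Prime).one_lt
  have hex : ExpChar M p := ExpChar.prime Fact.out
  obtain ⟨z, hz⟩ := hr
  simp only [pow_one] at hz
  let B := Algebra.adjoin A (insert r (z '' (S : Set ι)))
  have hfin : (insert r (z '' (S : Set ι))).Finite := (S.finite_toSet.image z).insert r
  have hB : (Subalgebra.toSubmodule B).FG :=
    fg_adjoin_of_finite hfin fun x _ => Algebra.IsIntegral.isIntegral x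
  have hrB : r ∈ B := Algebra.subset_adjoin (by simp)
  have hzB : ∀ l ∈ S, z l ∈ B := fun l hl => Algebra.subset_adjoin (Or.inr ⟨l, hl, rfl⟩)
  obtain ⟨N, hN, V', hV', hBV', h⟩ := hh_iter hPR hJ hj IH (Subalgebra.toSubmodule B) hB S subset_rfl
  obtain ⟨e0, he0⟩ : ∃ e0, ∀ l ∈ S, N l ≤ p ^ e0 :=
    ⟨∑ l ∈ S, N l, fun l hl => (Finset.single_le_sum (fun _ _ => Nat.zero_le _) hl).trans
      (Nat.lt_pow_self hp1).le⟩
  have hs : ∀ e, ∃ s ∈ V', e0 ≤ e → HHMem y (fun _ => p ^ e) S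
      (r ^ p ^ e - (∏ l ∈ S, y l ^ (p ^ e - N l)) • s) := by
    intro e
    by_cases hee : e0 ≤ e
    · obtain ⟨s, hs, hs1, _⟩ := h (p ^ e)
        (fun l hl => (he0 l hl).trans (Nat.pow_le_pow_right (by omega) hee))
        (Nat.one_le_pow _ _ (by omega)) (p ^ e) (r ^ p ^ e) (pow_mem hrB _)
        ⟨fun l => if l ∈ S then z l ^ p ^ e else 0, fun l => by
          by_cases hl : l ∈ S
          · simp only [hl, if_true]; exact pow_mem (hzB l hl) _
          · simp only [hl, if_false]; exact zero_mem _, by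
          have := congrArg (· ^ p ^ e) hz
          rw [smul_pow, sum_pow_char_pow] at this
          rw [this]
          refine Finset.sum_congr rfl fun l hl => ?_
          simp [hl, smul_pow]⟩
      exact ⟨s, hs, fun _ => hs1⟩
    · exact ⟨0, zero_mem _, fun h => absurd h hee⟩
  choose s hsV hs using hs
  -- Noetherian argument
  have : IsNoetherian A V' := isNoetherian_of_fg_of_noetherian V' hV'
  let W : ℕ →o Submodule A V' :=
    ⟨fun e => Submodule.span A (((fun i => (⟨s i, hsV i⟩ : V')) '' (Finset.Ico e0 e : Set ℕ))), by
      intro e e' hee'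
      apply Submodule.span_mono
      apply Set.image_mono
      intro i; simp; omega⟩
  obtain ⟨e1, he1⟩ := (monotone_stabilizes_iff_noetherian.mpr this) W
  obtain ⟨E, hE0, hE⟩ : ∃ E, e0 ≤ E ∧ (⟨s E, hsV E⟩ : V') ∈ W E := by
    refine ⟨max e0 e1, le_max_left _ _, ?_⟩
    have h1 := he1 (max e0 e1) (le_max_right _ _)
    have h2 := he1 (max e0 e1 + 1) ((le_max_right _ _).trans (Nat.le_succ _))
    rw [← h1, h2]
    exact Submodule.subset_span ⟨max e0 e1, by simp, rfl⟩
  obtain ⟨a₀, ha⟩ := (Submodule.mem_span_image_finset_iff_exists_fun (R := A)).mp hE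
  let a : ℕ → A := fun i => if h : i ∈ Finset.Ico e0 E then a₀ ⟨i, h⟩ else 0
  have ha' : s E = ∑ i ∈ Finset.Ico e0 E, a i • s i := by
    have := congrArg (Subtype.val) ha
    rw [AddSubmonoidClass.coe_finsetSum] at this
    rw [← Finset.sum_coe_sort]
    refine this.symm.trans ?_
    refine Finset.sum_congr rfl fun i _ => ?_
    simp only [a, i.2, dif_pos, Submodule.coe_smul]
  -- final
  have hlt : ∀ i ∈ Finset.Ico e0 E, p ^ i < p ^ E := fun i hi =>
    Nat.pow_lt_pow_right hp1 (Finset.mem_Ico.mp hi).2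
  have hfinal : HHMem y (fun _ => p ^ E) S (r ^ p ^ E - ∑ i ∈ Finset.Ico e0 E,
      (a i * (∏ l ∈ S, y l) ^ (p ^ E - p ^ i)) • r ^ p ^ i) := by
    have h1 : HHMem y (fun _ => p ^ E) S (∑ i ∈ Finset.Ico e0 E,
      (a i * (∏ l ∈ S, y l) ^ (p ^ E - p ^ i)) • (r ^ p ^ i - (∏ l ∈ S, y l ^ (p ^ i - N l)) • s i)) := by
      refine HHMem.sum _ fun i hi => ?_
      rw [mul_smul]
      refine HHMem.smul _ ((hs i (Finset.mem_Ico.mp hi).1).trans _ fun l hl => ⟨hl, ?_⟩)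
      refine ⟨(∏ l' ∈ S.erase l, y l') ^ (p ^ E - p ^ i), ?_⟩
      have hpe : p ^ E = (p ^ E - p ^ i) + p ^ i := by have := hlt i hi; omega
      have h5 : y l ^ p ^ E = y l ^ (p ^ E - p ^ i) * y l ^ p ^ i := by
        rw [← pow_add, ← hpe]
      rw [h5]
      rw [← Finset.mul_prod_erase S _ hl, mul_pow]
      ring
    have h2 := (hs E hE0).sub h1
    convert h2 using 1
    have h3 : (∏ l ∈ S, y l ^ (p ^ E - N l)) • s E = ∑ i ∈ Finset.Ico e0 E,
      (a i * (∏ l ∈ S, y l) ^ (p ^ E - p ^ i)) • (∏ l ∈ S, y l ^ (p ^ i - N l)) • s i := by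
      rw [ha', Finset.smul_sum]
      refine Finset.sum_congr rfl fun i hi => ?_
      rw [smul_smul, smul_smul, mul_comm, mul_assoc]
      congr 2
      rw [← Finset.prod_pow, ← Finset.prod_mul_distrib]
      refine Finset.prod_congr rfl fun l hl => ?_
      rw [← pow_add]
      congr 1
      have := hlt i hi
      have := (he0 l hl).trans (Nat.pow_le_pow_right (by omega : 0 < p) (Finset.mem_Ico.mp hi).1)
      omega
    simp only [smul_sub, Finset.sum_sub_distrib]
    rw [h3]
    abel
  obtain ⟨t, ht⟩ := hfinal
  have := hh_equational (L := L) p hroot S hS (fun l => algebraMap A M (y l)) hy r E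
    (fun i => if e0 ≤ i then algebraMap A M (a i) else 0) t (by
      simp only [Algebra.smul_def, map_pow] at ht
      rw [← ht]
      congr 1
      have : Finset.Ico e0 E = (Finset.range E).filter (fun i => e0 ≤ i) := by
        ext i; simp; omega
      rw [this, Finset.sum_filter]
      refine Finset.sum_congr rfl fun i hi => ?_
      split_ifs <;> simp)
  obtain ⟨z, hz⟩ := this
  exact ⟨z, by simpa [Algebra.smul_def] using hz⟩

theorem hh_claim {A M L ι : Type} [CommRing A] [IsNoetherianRing A] [CommRing M] [IsDomain M] [Field L] 
    [Algebra A M] [Algebra M L] [DecidableEq ι] [Algebra.IsIntegral A M]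
    [IsIntegrallyClosedIn M L] (p : ℕ) [Fact p.Prime] [CharP M p] (hinj : Function.Injective (algebraMap A M))
    (hroot : ∀ f : Polynomial M, f.Monic → f.natDegree ≠ 0 → ∃ t, f.eval t = 0)
    (k : ℕ) : ∀ (S : Finset ι) (_ : S.card = k) (y : ι → A) 
    (_ : HHPR y) (_ : HHJ (M := M) y) (j : ι) (_ : j ∉ S)  (r : M)
    (_ : HHMem y (fun _ => 1) S (y j • r)), HHMem y (fun _ => 1) S r := by
  induction k with
  | zero =>
    intro S hS y hPR hJ j hj r hr
    have hA : Nontrivial A := (algebraMap A M).domain_nontrivial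
    obtain rfl := Finset.card_eq_zero.mp hS
    obtain ⟨z, hz⟩ := hr
    simp only [Finset.sum_empty] at hz
    have hyj : y j ≠ 0 := by
      intro h0
      obtain ⟨g, hg⟩ := hPR ∅ j hj (fun _ => 1) (fun _ => le_rfl) 1 1 ⟨fun _ => 0, by simp [h0]⟩
      simp at hg
    rw [Algebra.smul_def, mul_eq_zero, map_eq_zero_iff _ hinj] at hz
    exact ⟨fun _ => 0, by simpa [hyj] using hz⟩
  | succ k ih =>
    intro S hS y hPR hJ j hj r hr
    have hA : Nontrivial A := (algebraMap A M).domain_nontrivial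
    have hyj : ∀ j, y j ≠ 0 := by
      intro j h0
      obtain ⟨g, hg⟩ := hPR ∅ j (by simp) (fun _ => 1) (fun _ => le_rfl) 1 1 ⟨fun _ => 0, by simp [h0]⟩
      simp at hg
    refine hh_claim_core (L := L) p hroot S (Finset.card_pos.mp (by omega)) y
      (fun l _ => by rw [Ne, map_eq_zero_iff _ hinj]; exact hyj l) hPR hJ hj ?_ r hr
    intro l0 hl0 l' hl' n hn c r hr
    rcases Nat.eq_zero_or_pos c with rfl | hc
    · simpa using hr
    have hm : ∀ l, 1 ≤ Function.update n l' c l := fun l => by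
      by_cases h : l = l'
      · subst h; rw [Function.update_self]; exact hc
      · simpa [h] using hn l
    have := ih (S.erase l0) (by rw [Finset.card_erase_of_mem hl0]; omega)
      (fun l => y l ^ (Function.update n l' c l)) (hPR.pow _ hm) (hJ.pow _ hm) l' hl' r ?_
    · obtain ⟨z, hz⟩ := this
      refine ⟨z, hz.trans (Finset.sum_congr rfl fun l hl => ?_)⟩
      have : l ≠ l' := fun h => hl' (h ▸ hl)
      simp [this]
    · obtain ⟨z, hz⟩ := hr
      simp only [Function.update_self]
      refine ⟨z, hz.trans (Finset.sum_congr rfl fun l hl => ?_)⟩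
      have : l ≠ l' := fun h => hl' (h ▸ hl)
      simp [this]

end HHPartC

section HHPartF
open TensorProduct RingTheory.Sequence in
theorem hh_syz {A : Type} [CommRing A] (rs' : List A) (h' : rs'.length ≤ 1) (rs : List A) :
    ∀ (Z F N : Type) [AddCommGroup Z] [AddCommGroup F] [AddCommGroup N] [Module A Z] [Module A F]
    [Module A N] (f : Z →ₗ[A] F) (g : F →ₗ[A] N), Function.Injective f → Function.Exact f g →
    Function.Surjective g → IsWeaklyRegular N rs → IsWeaklyRegular F (rs ++ rs') →
    IsWeaklyRegular Z (rs ++ rs') := by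
  induction rs with
  | nil =>
    intro Z F N _ _ _ _ _ _ f g hf hfg hg _ hF
    match rs', h' with
    | [], _ => exact .nil A Z
    | [a], _ =>
      simp only [List.nil_append, isWeaklyRegular_singleton_iff] at hF ⊢
      intro z w hzw
      apply hf
      apply hF
      have := congrArg f hzw
      simpa using this
  | cons a rs ih =>
    intro Z F N _ _ _ _ _ _ f g hf hfg hg hN hF
    rw [List.cons_append, isWeaklyRegular_cons_iff] at *
    refine ⟨?_, ?_⟩
    · intro z w hzw
      apply hf
      apply hF.1
      have := congrArg f hzw
      simpa using this
    · refine ih _ _ _ (QuotSMulTop.map a f) (QuotSMulTop.map a g) ?_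
        (QuotSMulTop.map_exact a hfg hg) (QuotSMulTop.map_surjective a hg) hN.2 hF.2
      rw [injective_iff_map_eq_zero]
      intro z hz
      obtain ⟨z, rfl⟩ := Submodule.Quotient.mk_surjective _ z
      rw [QuotSMulTop.map_apply_mk, Submodule.Quotient.mk_eq_zero] at hz
      rw [Submodule.Quotient.mk_eq_zero]
      obtain ⟨w, -, hw⟩ := (Submodule.mem_smul_pointwise_iff_exists _ _ _).mp hz
      have h0 : g w = 0 := by
        have : a • g w = a • (0 : N) := by
          rw [← map_smul, hw, hfg.apply_apply_eq_zero, smul_zero]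
        exact hN.1 this
      obtain ⟨z', rfl⟩ := (hfg w).mp h0
      refine (Submodule.mem_smul_pointwise_iff_exists _ _ _).mpr ⟨z', trivial, hf ?_⟩
      simpa using hw

open TensorProduct in
/-- snake element -/
theorem hh_snake {A Z G N K' F K : Type} [CommRing A] [AddCommGroup Z] [AddCommGroup G] [AddCommGroup N]
    [AddCommGroup K'] [AddCommGroup F] [AddCommGroup K] [Module A Z] [Module A G] [Module A N]
    [Module A K'] [Module A F] [Module A K] [Module.Flat A G]
    (i : Z →ₗ[A] G) (q : G →ₗ[A] N) (hiq : Function.Exact i q)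
    (hq : Function.Surjective q)
    (f : K' →ₗ[A] F) (g : F →ₗ[A] K) (hf : Function.Injective f) (hfg : Function.Exact f g)
    (hg : Function.Surjective g) (τ : N ⊗[A] K') (hτ : f.lTensor N τ = 0) :
    ∃ ζ : Z ⊗[A] K, i.rTensor K ζ = 0 ∧ ∀ a : A, a • ζ = 0 → a • τ = 0 := by
  obtain ⟨t, rfl⟩ := LinearMap.rTensor_surjective K' hq τ
  have h1 : q.rTensor F (f.lTensor G t) = 0 := by
    rw [← hτ, ← LinearMap.comp_apply, ← LinearMap.comp_apply, LinearMap.rTensor_comp_lTensor,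
      LinearMap.lTensor_comp_rTensor]
  obtain ⟨w, hw⟩ := (rTensor_exact F hiq hq _).mp h1
  refine ⟨g.lTensor Z w, ?_, fun a ha => ?_⟩
  · have : i.rTensor K (g.lTensor Z w) = g.lTensor G (i.rTensor F w) := by
      rw [← LinearMap.comp_apply, ← LinearMap.comp_apply, LinearMap.rTensor_comp_lTensor,
        LinearMap.lTensor_comp_rTensor]
    rw [this, hw]
    exact (lTensor_exact G hfg hg).apply_apply_eq_zero t
  · rw [← map_smul] at ha
    obtain ⟨u, hu⟩ := (lTensor_exact Z hfg hg _).mp ha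
    have h2 : i.rTensor K' u = a • t := by
      apply Module.Flat.lTensor_preserves_injective_linearMap (M := G) f hf
      have : f.lTensor G (i.rTensor K' u) = i.rTensor F (f.lTensor Z u) := by
        rw [← LinearMap.comp_apply, ← LinearMap.comp_apply, LinearMap.rTensor_comp_lTensor,
          LinearMap.lTensor_comp_rTensor]
      rw [this, hu, map_smul, map_smul, hw]
    rw [← map_smul, ← h2]
    exact (rTensor_exact K' hiq hq).apply_apply_eq_zero u

open TensorProduct in
theorem hh_lTensor_zero_iff {A N K' F : Type} [CommRing A] [AddCommGroup N]
    [AddCommGroup K'] [AddCommGroup F] [Module A N]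
    [Module A K'] [Module A F] (f : K' →ₗ[A] F) (τ : N ⊗[A] K') :
    f.rTensor N (TensorProduct.comm A N K' τ) = 0 ↔ f.lTensor N τ = 0 := by
  rw [← LinearMap.comm_comp_lTensor_comp_comm_eq]
  simp

open TensorProduct in
/-- snake element, other direction -/
theorem hh_snake' {A Z G N K' F K : Type} [CommRing A] [AddCommGroup Z] [AddCommGroup G] [AddCommGroup N]
    [AddCommGroup K'] [AddCommGroup F] [AddCommGroup K] [Module A Z] [Module A G] [Module A N]
    [Module A K'] [Module A F] [Module A K] [Module.Flat A F]
    (i : Z →ₗ[A] G) (q : G →ₗ[A] N) (hi : Function.Injective i) (hiq : Function.Exact i q)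
    (hq : Function.Surjective q)
    (f : K' →ₗ[A] F) (g : F →ₗ[A] K) (hfg : Function.Exact f g)
    (hg : Function.Surjective g) (ζ : Z ⊗[A] K) (hζ : i.rTensor K ζ = 0) :
    ∃ τ : N ⊗[A] K', f.lTensor N τ = 0 ∧ ∀ a : A, a • τ = 0 → a • ζ = 0 := by
  obtain ⟨τ, h1, h2⟩ := hh_snake f g hfg hg i q hi hiq hq (TensorProduct.comm A Z K ζ) (by
    rw [← hh_lTensor_zero_iff]
    simpa [TensorProduct.comm_comm] using hζ)
  refine ⟨TensorProduct.comm A K' N τ, ?_, fun a ha => ?_⟩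
  · rw [← hh_lTensor_zero_iff]
    simpa using h1
  · rw [← map_smul, LinearEquiv.map_eq_zero_iff] at ha
    have := h2 a ha
    rwa [← map_smul, LinearEquiv.map_eq_zero_iff] at this

/-- flat dimension at most n -/
def HHFD (A : Type) [CommRing A] : ℕ → ∀ (K : Type) [AddCommGroup K] [Module A K], Prop
  | 0, K, _, _ => Module.Flat A K
  | n + 1, K, _, _ => ∃ (F K' : Type) (_ : AddCommGroup F) (_ : Module A F) (_ : AddCommGroup K')
      (_ : Module A K') (f : K' →ₗ[A] F) (g : F →ₗ[A] K), Module.Flat A F ∧ Function.Injective f ∧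
      Function.Exact f g ∧ Function.Surjective g ∧ HHFD A n K'

open TensorProduct in
/-- Tor is torsion with respect to the maximal ideal -/
def HHLF (A : Type) [CommRing A] [IsLocalRing A] (K : Type) [AddCommGroup K] [Module A K] : Prop :=
  ∀ (Z G : Type) [AddCommGroup Z] [Module A Z] [AddCommGroup G] [Module A G] [Module.Finite A Z]
    [Module.Finite A G] [Module.Flat A G] (i : Z →ₗ[A] G), Function.Injective i →
    ∀ ζ : Z ⊗[A] K, i.rTensor K ζ = 0 → ∀ a ∈ IsLocalRing.maximalIdeal A, ∃ n : ℕ, a ^ n • ζ = 0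

section
variable {A : Type} [CommRing A] [IsLocalRing A] [IsNoetherianRing A]
open TensorProduct RingTheory.Sequence

theorem HHLF.ker {K' F K : Type}
    [AddCommGroup K'] [AddCommGroup F] [AddCommGroup K]
    [Module A K'] [Module A F] [Module A K] (hK : HHLF A K)
    (f : K' →ₗ[A] F) (g : F →ₗ[A] K) (hf : Function.Injective f) (hfg : Function.Exact f g)
    (hg : Function.Surjective g) (N : Type) [AddCommGroup N] [Module A N] [Module.Finite A N]
    (τ : N ⊗[A] K') (hτ : f.lTensor N τ = 0) (a : A) (ha : a ∈ IsLocalRing.maximalIdeal A) :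
    ∃ n : ℕ, a ^ n • τ = 0 := by
  obtain ⟨n, q, hq⟩ := Module.Finite.exists_fin' A N
  obtain ⟨ζ, h1, h2⟩ := hh_snake (LinearMap.ker q).subtype q (LinearMap.exact_subtype_ker_map q) hq
    f g hf hfg hg τ hτ
  obtain ⟨n, hn⟩ := hK _ _ (LinearMap.ker q).subtype (Subtype.val_injective) ζ h1 a ha
  exact ⟨n, h2 _ hn⟩

theorem HHLF.syz {K' F K : Type}
    [AddCommGroup K'] [AddCommGroup F] [AddCommGroup K]
    [Module A K'] [Module A F] [Module A K] [Module.Flat A F] (hK : HHLF A K)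
    (f : K' →ₗ[A] F) (g : F →ₗ[A] K) (hf : Function.Injective f) (hfg : Function.Exact f g)
    (hg : Function.Surjective g) : HHLF A K' := by
  intro Z G _ _ _ _ _ _ _ i hi ζ hζ a ha
  refine hK.ker f g hf hfg hg Z ζ ?_ a ha
  apply Module.Flat.rTensor_preserves_injective_linearMap (M := F) i hi
  rw [map_zero]
  have : i.rTensor F (f.lTensor Z ζ) = f.lTensor G (i.rTensor K' ζ) := by
    rw [← LinearMap.comp_apply, ← LinearMap.comp_apply, LinearMap.rTensor_comp_lTensor,
      LinearMap.lTensor_comp_rTensor]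
  rw [this, hζ, map_zero]

theorem hh_flat_of_ker {K' F K : Type}
    [AddCommGroup K'] [AddCommGroup F] [AddCommGroup K]
    [Module A K'] [Module A F] [Module A K] [Module.Flat A F]
    (f : K' →ₗ[A] F) (g : F →ₗ[A] K) (hfg : Function.Exact f g)
    (hg : Function.Surjective g)
    (h : ∀ I : Ideal A, Function.Injective (f.lTensor (A ⧸ I))) : Module.Flat A K := by
  rw [Module.Flat.iff_rTensor_injective']
  intro I
  rw [injective_iff_map_eq_zero]
  intro ζ hζ
  obtain ⟨τ, h1, h2⟩ := hh_snake' (Submodule.subtype I) (Submodule.mkQ I) (Subtype.val_injective)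
    (LinearMap.exact_subtype_mkQ I) (Submodule.mkQ_surjective I) f g hfg hg ζ hζ
  have : τ = 0 := h I (by rw [h1, map_zero])
  simpa using h2 1 (by simp [this])

theorem hh_quot_inj {K' F K : Type}
    [AddCommGroup K'] [AddCommGroup F] [AddCommGroup K]
    [Module A K'] [Module A F] [Module A K]
    (f : K' →ₗ[A] F) (g : F →ₗ[A] K) (hf : Function.Injective f) (hfg : Function.Exact f g)
    (hg : Function.Surjective g) (ys : List A) (hy : IsWeaklyRegular K ys) :
    Function.Injective (f.lTensor (A ⧸ Ideal.ofList ys)) := by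
  have h0 : Function.Exact (0 : PUnit →ₗ[A] K') f := by
    rw [LinearMap.exact_zero_iff_injective]; exact hf
  have h1 := map_first_exact_on_four_term_right_exact_of_isSMulRegular_last h0 hfg hg hy
  rw [injective_iff_map_eq_zero]
  intro τ hτ
  have h2 : ∀ τ, TensorProduct.quotTensorEquivQuotSMul F (Ideal.ofList ys) (f.lTensor _ τ) =
     Submodule.mapQ _ _ _ (Submodule.smul_top_le_comap_smul_top (Ideal.ofList ys) f)
      (TensorProduct.quotTensorEquivQuotSMul K' (Ideal.ofList ys) τ) := by
    intro τ
    induction τ with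
    | zero => simp
    | add x y hx hy => simp only [map_add, hx, hy]
    | tmul x y =>
      obtain ⟨x, rfl⟩ := Submodule.mkQ_surjective _ x
      simp [Submodule.mapQ_apply]
  have h3 := h2 τ
  rw [hτ, map_zero] at h3
  obtain ⟨u, hu⟩ := (h1 _).mp h3.symm
  obtain ⟨u, rfl⟩ := Submodule.mkQ_surjective _ u
  rw [Submodule.mkQ_apply, Submodule.mapQ_apply] at hu
  simp only [LinearMap.zero_apply, Submodule.Quotient.mk_zero] at hu
  exact (LinearEquiv.map_eq_zero_iff _).mp hu.symm

theorem hh_flat_step {K' F K : Type}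
    [AddCommGroup K'] [AddCommGroup F] [AddCommGroup K]
    [Module A K'] [Module A F] [Module A K] [Module.Flat A F] [Module.Flat A K'] (hK : HHLF A K)
    (f : K' →ₗ[A] F) (g : F →ₗ[A] K) (hf : Function.Injective f) (hfg : Function.Exact f g)
    (hg : Function.Surjective g) (ys : List A) (hy : IsWeaklyRegular K ys)
    (e : (A ⧸ IsLocalRing.maximalIdeal A) →ₗ[A] (A ⧸ Ideal.ofList ys)) (he : Function.Injective e) :
    Module.Flat A K := by
  apply hh_flat_of_ker f g hfg hg
  intro I
  have main : ∀ (N : Type) [AddCommGroup N] [Module A N] (_ : Module.Finite A N),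
      Function.Injective (f.lTensor N) := by
    intro N _ _ hfin
    induction hfin using IsNoetherianRing.induction_on_isQuotientEquivQuotientPrime A with
    | subsingleton N =>
      intro x y _
      exact Subsingleton.elim _ _
    | quotient N p φ =>
      rw [injective_iff_map_eq_zero]
      intro τ hτ
      by_cases hp : p.1 = IsLocalRing.maximalIdeal A
      · obtain ⟨Q, hQ⟩ := p
        dsimp only at hp φ
        subst hp
        have hj : Function.Injective (e ∘ₗ φ.toLinearMap) := he.comp φ.injective
        have h1 := Module.Flat.rTensor_preserves_injective_linearMap (M := K') _ hj
        apply h1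
        apply hh_quot_inj f g hf hfg hg ys hy
        rw [map_zero, map_zero, ← LinearMap.comp_apply, LinearMap.lTensor_comp_rTensor,
          ← LinearMap.rTensor_comp_lTensor, LinearMap.comp_apply, hτ, map_zero]
      · have hlt : ¬ IsLocalRing.maximalIdeal A ≤ p.1 := fun h =>
          hp (le_antisymm (IsLocalRing.le_maximalIdeal p.2.ne_top) h)
        obtain ⟨a, ham, hap⟩ := Set.not_subset.mp hlt
        obtain ⟨n, hn⟩ := hK.ker f g hf hfg hg N τ hτ a ham
        have hreg : IsSMulRegular N (a ^ n) := by
          rw [isSMulRegular_iff_right_eq_zero_of_smul]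
          intro x hx
          obtain ⟨x, rfl⟩ := φ.symm.surjective x
          obtain ⟨x, rfl⟩ := Submodule.mkQ_surjective _ x
          rw [← map_smul, LinearEquiv.map_eq_zero_iff, ← map_smul, Submodule.mkQ_apply,
            Submodule.Quotient.mk_eq_zero] at hx
          rw [LinearEquiv.map_eq_zero_iff, Submodule.mkQ_apply, Submodule.Quotient.mk_eq_zero]
          have := p.2
          exact (this.mem_or_mem hx).resolve_left fun h => hap (this.mem_of_pow_mem _ h)
        have hreg2 : IsSMulRegular (N ⊗[A] K') (a ^ n) := hreg.rTensor K'
        exact (isSMulRegular_iff_right_eq_zero_of_smul).mp hreg2 τ hn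
    | exact N₁ N₂ N₃ f' g' hf' hg' hfg' h₁ h₃ =>
      rw [injective_iff_map_eq_zero]
      intro τ hτ
      have h4 : g'.rTensor K' τ = 0 := by
        apply h₃
        rw [map_zero, ← LinearMap.comp_apply, LinearMap.lTensor_comp_rTensor,
          ← LinearMap.rTensor_comp_lTensor, LinearMap.comp_apply, hτ, map_zero]
      obtain ⟨σ, rfl⟩ := (rTensor_exact K' hfg' hg' _).mp h4
      have : σ = 0 := by
        apply h₁
        apply Module.Flat.rTensor_preserves_injective_linearMap (M := F) f' hf'
        rw [map_zero, map_zero, ← LinearMap.comp_apply, LinearMap.rTensor_comp_lTensor,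
          ← LinearMap.lTensor_comp_rTensor, LinearMap.comp_apply, hτ]
      rw [this, map_zero]
  exact main _ inferInstance

theorem hh_reg_flat {F : Type} [AddCommGroup F] [Module A F] [Module.Flat A F] (ys : List A)
    (hA : IsWeaklyRegular A ys) : IsWeaklyRegular F ys :=
  ((TensorProduct.lid A F).isWeaklyRegular_congr ys).mp hA.isWeaklyRegular_rTensor

theorem hh_lemFlat (ys : List A) (hA : IsWeaklyRegular A ys)
    (e : (A ⧸ IsLocalRing.maximalIdeal A) →ₗ[A] (A ⧸ Ideal.ofList ys)) (he : Function.Injective e)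
    (n : ℕ) : ∀ (K : Type) [AddCommGroup K] [Module A K], HHFD A n K → HHLF A K →
      IsWeaklyRegular K ys → Module.Flat A K := by
  induction n with
  | zero => intro K _ _ h _ _; exact h
  | succ n ih =>
    intro K _ _ h hLF hy
    obtain ⟨F, K', _, _, _, _, f, g, hF, hf, hfg, hg, h⟩ := h
    have hyF : IsWeaklyRegular F ys := hh_reg_flat ys hA
    have : Module.Flat A K' := ih K' h (hLF.syz f g hf hfg hg) (by
      have := hh_syz [] (by simp) ys K' F K f g hf hfg hg hy (by simpa using hyF)
      simpa using this)
    exact hh_flat_step hLF f g hf hfg hg ys hy e he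

/-- torsion of Tor from the factorization property -/
theorem hh_LF_of_J {K : Type} [AddCommGroup K] [Module A K]
    (h : ∀ a ∈ IsLocalRing.maximalIdeal A, HHJ (M := K) (fun _ : Unit => a)) : HHLF A K := by
  intro Z G _ _ _ _ _ _ _ i hi ζ hζ a ha
  obtain ⟨V, hV, hζV⟩ := TensorProduct.exists_finite_submodule_right_of_setFinite {ζ} (Set.finite_singleton ζ)
  obtain ⟨ζ', hζ'⟩ := hζV (Set.mem_singleton ζ)
  obtain ⟨N, k, φ, ψ, hφ⟩ := h a ha V (Module.Finite.iff_fg.mp hV) ()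
  refine ⟨N, ?_⟩
  have h1 : i.rTensor V ζ' = 0 := by
    apply Module.Flat.lTensor_preserves_injective_linearMap (M := G) V.subtype Subtype.val_injective
    rw [map_zero, ← LinearMap.comp_apply, LinearMap.lTensor_comp_rTensor,
          ← LinearMap.rTensor_comp_lTensor, LinearMap.comp_apply, hζ', hζ]
  have h2 : φ.lTensor Z ζ' = 0 := by
    apply Module.Flat.rTensor_preserves_injective_linearMap (M := Fin k → A) i hi
    rw [map_zero, ← LinearMap.comp_apply, LinearMap.rTensor_comp_lTensor,
          ← LinearMap.lTensor_comp_rTensor, LinearMap.comp_apply, h1, map_zero]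
  have h3 : ψ ∘ₗ φ = a ^ N • V.subtype := by
    ext v; exact hφ v
  have h4 : (ψ ∘ₗ φ).lTensor Z ζ' = 0 := by
    rw [LinearMap.lTensor_comp, LinearMap.comp_apply, h2, map_zero]
  rw [h3, LinearMap.lTensor_smul, LinearMap.smul_apply, hζ'] at h4
  exact h4
end

end HHPartF

section HHPartG
open RingTheory.Sequence

theorem hh_mem_ofList {A M ι : Type} [CommRing A] [AddCommGroup M] [Module A M] (y : ι → A) (n : ι → ℕ)
    (S : Finset ι) (l : List A) (hl : ∀ a, a ∈ l ↔ ∃ i ∈ S, y i ^ n i = a) (w : M) :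
    w ∈ (Ideal.ofList l • ⊤ : Submodule A M) ↔ HHMem y n S w := by
  constructor
  · let W : Submodule A M :=
      { carrier := {w | HHMem y n S w}
        add_mem' := fun h h' => h.add h'
        zero_mem' := HHMem.zero
        smul_mem' := fun a _ h => h.smul a }
    suffices h : (Ideal.ofList l • ⊤ : Submodule A M) ≤ W from fun hw => h hw
    rw [Submodule.smul_le]
    intro r hr m _
    induction hr using Submodule.span_induction with
    | mem x hx =>
      obtain ⟨i, hi, rfl⟩ := (hl x).mp hx
      exact HHMem.single hi m
    | zero => rw [zero_smul]; exact zero_mem _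
    | add x y _ _ hx hy => rw [add_smul]; exact add_mem hx hy
    | smul a x _ hx => rw [smul_assoc]; exact Submodule.smul_mem _ _ hx
  · rintro ⟨z, rfl⟩
    refine sum_mem fun i hi => Submodule.smul_mem_smul ?_ trivial
    exact Ideal.subset_span ((hl _).mpr ⟨i, hi, rfl⟩)

section
variable {A : Type} [CommRing A] [IsLocalRing A] [IsNoetherianRing A]

theorem hh_wr_pow {ι : Type} (y : ι → A) (hm : ∀ i, y i ∈ IsLocalRing.maximalIdeal A) (n : ι → ℕ)
    (hn : ∀ i, 1 ≤ n i) (t : List ι) : ∀ u : List A, (∀ a ∈ u, a ∈ IsLocalRing.maximalIdeal A) →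
    IsWeaklyRegular A (t.map y ++ u) → IsWeaklyRegular A (t.map (fun i => y i ^ n i) ++ u) := by
  have hm' : ∀ i, y i ^ n i ∈ IsLocalRing.maximalIdeal A := fun i =>
    Ideal.pow_mem_of_mem _ (hm i) _ (hn i)
  induction t with
  | nil => intro u _ h; simpa using h
  | cons l t ih =>
    intro u hu h
    have hmem : ∀ a ∈ (l :: t).map y ++ u, a ∈ IsLocalRing.maximalIdeal A := by
      intro a ha
      rw [List.mem_append, List.mem_map] at ha
      rcases ha with ⟨i, _, rfl⟩ | ha
      exacts [hm i, hu a ha]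
    have hp : ((l :: t).map y ++ u).Perm ((t.map y ++ u) ++ [y l]) := by
      rw [List.map_cons, List.cons_append]
      exact (List.perm_append_singleton _ _).symm
    have h1 := IsLocalRing.isWeaklyRegular_of_perm_of_subset_maximalIdeal h hp hmem
    rw [isWeaklyRegular_append_iff, isWeaklyRegular_singleton_iff] at h1
    have h2 : IsWeaklyRegular A ((t.map y ++ u) ++ [y l ^ n l]) := by
      rw [isWeaklyRegular_append_iff, isWeaklyRegular_singleton_iff]
      exact ⟨h1.1, h1.2.pow _⟩
    rw [List.append_assoc] at h2
    have hu' : ∀ a ∈ u ++ [y l ^ n l], a ∈ IsLocalRing.maximalIdeal A := by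
      intro a ha
      rw [List.mem_append, List.mem_singleton] at ha
      rcases ha with ha | rfl
      exacts [hu a ha, hm' l]
    have h3 := ih _ hu' h2
    refine IsLocalRing.isWeaklyRegular_of_perm_of_subset_maximalIdeal h3 ?_ ?_
    · rw [← List.append_assoc, List.map_cons, List.cons_append]
      exact (List.perm_append_singleton _ _)
    · intro a ha
      rw [List.mem_append, List.mem_map] at ha
      rcases ha with ⟨i, _, rfl⟩ | ha
      exacts [hm' i, hu' a ha]

theorem hh_PR {h : ℕ} (y : Fin h → A) (hm : ∀ i, y i ∈ IsLocalRing.maximalIdeal A)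
    (hy : IsWeaklyRegular A (List.ofFn y)) : HHPR y := by
  classical
  intro S j hj n hn c f hf
  rcases Nat.eq_zero_or_pos c with rfl | hc
  · simpa using hf
  let n' := Function.update n j c
  have hn' : ∀ i, 1 ≤ n' i := fun i => by
    by_cases h : i = j
    · subst h; simp only [n', Function.update_self]; exact hc
    · simpa [n', h] using hn i
  have h1 : (List.finRange h).Perm ((S.toList ++ [j]) ++ ((Finset.univ \ (insert j S)).toList)) := by
    apply List.perm_of_nodup_nodup_toFinset_eq (List.nodup_finRange h)
    · rw [List.nodup_append, List.nodup_append]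
      refine ⟨⟨S.nodup_toList, by simp, ?_⟩, Finset.nodup_toList _, ?_⟩
      · intro a ha b hb; simp at ha hb; subst hb; rintro rfl; exact hj ha
      · intro a ha b hb; simp at ha hb; rintro rfl; tauto
    · ext i; simp; tauto
  have h2 : IsWeaklyRegular A ((S.toList ++ [j]).map y) := by
    rw [List.ofFn_eq_map] at hy
    have := IsLocalRing.isWeaklyRegular_of_perm_of_subset_maximalIdeal hy (h1.map y) (by
      intro a ha; rw [List.mem_map] at ha; obtain ⟨i, _, rfl⟩ := ha; exact hm i)
    rw [List.map_append, isWeaklyRegular_append_iff] at this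
    exact this.1
  have h3 := hh_wr_pow y hm n' hn' (S.toList ++ [j]) [] (by simp) (by simpa using h2)
  rw [List.append_nil, List.map_append, isWeaklyRegular_append_iff, List.map_singleton,
    isWeaklyRegular_singleton_iff] at h3
  have hl : ∀ a, a ∈ S.toList.map (fun i => y i ^ n' i) ↔ ∃ i ∈ S, y i ^ n' i = a := by simp
  have hnn : ∀ i ∈ S, n' i = n i := fun i hi => by
    have : i ≠ j := fun h => hj (h ▸ hi)
    simp [n', this]
  obtain ⟨g, hg⟩ := hf
  have h4 : Submodule.Quotient.mk (p := (Ideal.ofList (S.toList.map fun i => y i ^ n' i) • ⊤ :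
      Submodule A A)) f = 0 := by
    apply isSMulRegular_iff_right_eq_zero_of_smul.mp h3.2
    rw [← Submodule.Quotient.mk_smul, Submodule.Quotient.mk_eq_zero, hh_mem_ofList y n' S _ hl]
    refine ⟨g, ?_⟩
    simp only [n', Function.update_self, smul_eq_mul]
    rw [hg]
    exact Finset.sum_congr rfl fun i hi => by rw [← hnn i hi]
  rw [Submodule.Quotient.mk_eq_zero, hh_mem_ofList y n' S _ hl] at h4
  obtain ⟨g, hg⟩ := h4
  exact ⟨g, hg.trans (Finset.sum_congr rfl fun i hi => by rw [hnn i hi, smul_eq_mul])⟩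

theorem hh_wr_of_claim {M : Type} [AddCommGroup M] [Module A M] {h : ℕ} (y : Fin h → A)
    (hc : ∀ (S : Finset (Fin h)) (j), j ∉ S → ∀ r : M, HHMem y (fun _ => 1) S (y j • r) →
      HHMem y (fun _ => 1) S r) : IsWeaklyRegular M (List.ofFn y) := by
  rw [isWeaklyRegular_iff]
  intro i hi
  rw [List.length_ofFn] at hi
  have hl : ∀ a, a ∈ (List.ofFn y).take i ↔ ∃ j ∈ Finset.univ.filter (fun j : Fin h => j.1 < i),
      y j ^ 1 = a := by
    intro a
    rw [List.mem_take_iff_getElem]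
    simp only [List.getElem_ofFn, List.length_ofFn, Finset.mem_filter, Finset.mem_univ, true_and,
      pow_one]
    constructor
    · rintro ⟨j, hj, rfl⟩; exact ⟨⟨j, by omega⟩, by simp; omega, rfl⟩
    · rintro ⟨j, hj, rfl⟩; exact ⟨j, by omega, rfl⟩
  rw [isSMulRegular_iff_right_eq_zero_of_smul]
  intro x hx
  obtain ⟨x, rfl⟩ := Submodule.Quotient.mk_surjective _ x
  rw [← Submodule.Quotient.mk_smul, Submodule.Quotient.mk_eq_zero,
    hh_mem_ofList y (fun _ => 1) _ _ hl] at hx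
  rw [Submodule.Quotient.mk_eq_zero, hh_mem_ofList y (fun _ => 1) _ _ hl]
  exact hc _ ⟨i, hi⟩ (by simp) x (by simpa using hx)

theorem hh_exists_max : ∃ ys : List A, (∀ a ∈ ys, a ∈ IsLocalRing.maximalIdeal A) ∧
    IsWeaklyRegular A ys ∧ ∃ e : (A ⧸ IsLocalRing.maximalIdeal A) →ₗ[A] (A ⧸ Ideal.ofList ys),
      Function.Injective e := by
  let X : Set (Ideal A) := {I | ∃ ys : List A, (∀ a ∈ ys, a ∈ IsLocalRing.maximalIdeal A) ∧
    IsWeaklyRegular A ys ∧ I = Ideal.ofList ys}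
  have hX : X.Nonempty := ⟨_, [], by simp, .nil A A, rfl⟩
  obtain ⟨I, ⟨ys, hm, hy, rfl⟩, hmax⟩ := set_has_maximal_iff_noetherian.mpr ‹IsNoetherianRing A› X hX
  refine ⟨ys, hm, hy, ?_⟩
  have hle : Ideal.ofList ys ≤ IsLocalRing.maximalIdeal A := Ideal.span_le.mpr hm
  have hnt : Nontrivial (A ⧸ Ideal.ofList ys) := Ideal.Quotient.nontrivial_iff.mpr
    (fun h => (IsLocalRing.maximalIdeal.isMaximal A).ne_top (top_le_iff.mp (h ▸ hle)))
  have hzd : (IsLocalRing.maximalIdeal A : Set A) ⊆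
      ⋃ p ∈ associatedPrimes A (A ⧸ Ideal.ofList ys), p := by
    rw [biUnion_associatedPrimes_eq_zero_divisors]
    intro a ha
    by_contra hcon
    have hreg : IsSMulRegular (A ⧸ Ideal.ofList ys) a := by
      rw [isSMulRegular_iff_right_eq_zero_of_smul]
      intro x hx
      by_contra hx0
      exact hcon ⟨x, hx0, hx⟩
    have h1 : IsWeaklyRegular A (ys ++ [a]) := by
      rw [isWeaklyRegular_append_iff, isWeaklyRegular_singleton_iff]
      refine ⟨hy, ?_⟩
      have : (Ideal.ofList ys • ⊤ : Submodule A A) = Ideal.ofList ys := by simp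
      rw [this]; exact hreg
    have h2 := hmax (Ideal.ofList (ys ++ [a])) ⟨_, by
      intro b hb
      rw [List.mem_append, List.mem_singleton] at hb
      rcases hb with hb | rfl
      exacts [hm b hb, ha], h1, rfl⟩
    have h3 : a ∉ Ideal.ofList ys := by
      intro h
      have : a • (1 : A ⧸ Ideal.ofList ys) = 0 := by
        rw [Algebra.smul_def, mul_one]
        exact Ideal.Quotient.eq_zero_iff_mem.mpr h
      exact one_ne_zero (isSMulRegular_iff_right_eq_zero_of_smul.mp hreg _ this)
    apply h2
    refine lt_of_le_of_ne (by rw [Ideal.ofList_append]; exact le_sup_left) fun h => h3 ?_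
    rw [h]
    exact Ideal.subset_span (by simp)
  have hfin := associatedPrimes.finite A (A ⧸ Ideal.ofList ys)
  obtain ⟨P, hP, hmP⟩ := (Ideal.subset_union_prime (s := hfin.toFinset) (f := id) ⊥ ⊥
    (fun i hi _ _ => ((hfin.mem_toFinset).mp hi).1)).mp (by simpa using hzd)
  rw [hfin.mem_toFinset] at hP
  have hPe : IsLocalRing.maximalIdeal A = P :=
    (IsLocalRing.maximalIdeal.isMaximal A).eq_of_le hP.1.ne_top hmP
  rw [← hPe] at hP
  obtain ⟨hpr, x, hx⟩ := (isAssociatedPrime_iff_exists_injective_linearMap _ _).mp hP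
  exact ⟨x, hx⟩

end

end HHPartG

section HHPartH
open TensorProduct RingTheory.Sequence

theorem HHFD.congr {A : Type} [CommRing A] (n : ℕ) {K K' : Type} [AddCommGroup K] [Module A K]
    [AddCommGroup K'] [Module A K'] (e : K ≃ₗ[A] K') (h : HHFD A n K) : HHFD A n K' := by
  cases n with
  | zero => exact (Module.Flat.equiv_iff e).mp h
  | succ n =>
    obtain ⟨F, Z, _, _, _, _, f, g, hF, hf, hfg, hg, hZ⟩ := h
    refine ⟨F, Z, _, _, _, _, f, e.toLinearMap ∘ₗ g, hF, hf, ?_, ?_, hZ⟩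
    · intro x
      rw [← hfg x]
      simp
    · exact e.surjective.comp hg

theorem HHFD.baseChange {A B : Type} [CommRing A] [CommRing B] [Algebra A B] [Module.Flat A B] (n : ℕ) :
    ∀ (K : Type) [AddCommGroup K] [Module A K], HHFD A n K → HHFD B n (B ⊗[A] K) := by
  induction n with
  | zero => 
    intro K _ _ h
    have : Module.Flat A K := h
    exact (inferInstance : Module.Flat B (B ⊗[A] K))
  | succ n ih =>
    intro K _ _ h
    obtain ⟨F, Z, _, _, _, _, f, g, hF, hf, hfg, hg, hZ⟩ := h
    refine ⟨B ⊗[A] F, B ⊗[A] Z, _, _, _, _, f.baseChange B, g.baseChange B, inferInstance, ?_, ?_, ?_, ih _ hZ⟩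
    · exact Module.Flat.lTensor_preserves_injective_linearMap f hf
    · exact lTensor_exact B hfg hg
    · exact LinearMap.lTensor_surjective B hg

theorem hh_gfd_loc {A B : Type} [CommRing A] [CommRing B] [Algebra A B] (S : Submonoid A)
    [IsLocalization S B] (n : ℕ) (h : ∀ (K : Type) [AddCommGroup K] [Module A K], HHFD A n K)
    (K : Type) [AddCommGroup K] [Module B K] : HHFD B n K := by
  letI : Module A K := Module.compHom K (algebraMap A B)
  haveI : IsScalarTower A B K := IsScalarTower.of_algebraMap_smul fun r x => rfl
  haveI : Module.Flat A B := IsLocalization.flat B S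
  haveI := isLocalizedModule_id (M := K) S B
  exact HHFD.congr n (IsLocalizedModule.isBaseChange S B (LinearMap.id : K →ₗ[A] K)).equiv
    (HHFD.baseChange n K (h K))

/-- factorization ideal -/
def HHJI {A M : Type} [CommRing A] [AddCommGroup M] [Module A M] (V : Submodule A M) : Ideal A where
  carrier := {a | ∃ T : List ((V →ₗ[A] A) × M), ∀ v : V, (T.map fun t => t.1 v • t.2).sum = a • (v : M)}
  zero_mem' := ⟨[], by simp⟩
  add_mem' := by
    rintro a b ⟨T, hT⟩ ⟨T', hT'⟩
    exact ⟨T ++ T', fun v => by rw [List.map_append, List.sum_append, hT, hT', add_smul]⟩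
  smul_mem' := by
    rintro c a ⟨T, hT⟩
    refine ⟨T.map fun t => (t.1, c • t.2), fun v => ?_⟩
    rw [List.map_map, smul_assoc, ← hT v, List.smul_sum, List.map_map]
    congr 1
    refine List.map_congr_left fun t _ => ?_
    simp [smul_comm c]

theorem HHJI.mem_of_fin {A M : Type} [CommRing A] [AddCommGroup M] [Module A M] {V : Submodule A M} {a : A}
    {k : ℕ} (φ : V →ₗ[A] (Fin k →₀ A)) (m : Fin k → M) (h : ∀ v : V, ∑ i, φ v i • m i = a • (v : M)) :
    a ∈ HHJI V := by
  refine ⟨List.ofFn fun i => ((Finsupp.lapply i).comp φ, m i), fun v => ?_⟩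
  rw [← h v, List.map_ofFn, List.sum_ofFn]
  rfl

theorem hh_J_of_local {A L : Type} [CommRing A] [IsNoetherianRing A] [Field L] [Algebra A L]
    (B : Type) [CommRing B] [Algebra A B] [Algebra B L] [IsScalarTower A B L] (S : Submonoid A)
    [IsLocalization S B] [Module.Flat B (integralClosure B L)]
    (V : Submodule A (integralClosure A L)) (hV : V.FG) : ∃ s ∈ S, s ∈ HHJI V := by
  classical
  haveI : Module.Flat A B := IsLocalization.flat B S
  haveI : Module.Flat A (integralClosure B L) := Module.Flat.trans A B _
  haveI : Module.Finite A V := Module.Finite.iff_fg.mpr hV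
  let j : V →ₗ[A] (integralClosure B L) :=
    { toFun := fun v => ⟨((v : integralClosure A L) : L), v.1.2.tower_top⟩
      map_add' := fun v w => rfl
      map_smul' := fun a v => rfl }
  haveI : Module.FinitePresentation A V := Module.finitePresentation_of_finite A V
  obtain ⟨k, φ, ψ, hj⟩ := Module.Flat.exists_factorization_of_finitePresentation j
  have h1 : ∀ i, ∃ m : S, IsIntegral A (m • (ψ (Finsupp.single i 1) : L)) := fun i =>
    IsIntegral.exists_multiple_integral_of_isLocalization S _ (ψ (Finsupp.single i 1)).2
  choose s hs using h1
  refine ⟨((∏ i, s i : S) : A), (∏ i, s i).2, ?_⟩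
  have h2 : ∀ i, IsIntegral A (((∏ i, s i : S) : A) • (ψ (Finsupp.single i 1) : L)) := fun i => by
    rw [← Finset.prod_erase_mul _ _ (Finset.mem_univ i), Submonoid.coe_mul, mul_smul]
    exact (hs i).smul _
  refine HHJI.mem_of_fin φ (fun i => ⟨_, h2 i⟩) fun v => ?_
  apply Subtype.ext
  have h3 : ((v : integralClosure A L) : L) = ψ (φ v) := congrArg Subtype.val (LinearMap.congr_fun hj v)
  have h4 : ψ (φ v) = ∑ i, φ v i • ψ (Finsupp.single i 1) := by
    conv_lhs => rw [← Finsupp.univ_sum_single (φ v)]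
    rw [map_sum]
    refine Finset.sum_congr rfl fun i _ => ?_
    rw [← map_smul, Finsupp.smul_single, smul_eq_mul, mul_one]
  have h5 : (((((∏ i, s i : S) : A)) • (v : integralClosure A L) : integralClosure A L) : L)
      = ((∏ i, s i : S) : A) • ((v : integralClosure A L) : L) := rfl
  rw [h5, h3, h4]
  simp only [AddSubmonoidClass.coe_finsetSum, Finset.smul_sum]
  refine Finset.sum_congr rfl fun i _ => ?_
  exact smul_comm (φ v i) (((∏ i, s i : S) : A)) (ψ (Finsupp.single i 1) : L)

theorem hh_J_of_JI {A M ι : Type} [CommRing A] [IsLocalRing A] [AddCommGroup M] [Module A M]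
    (h : ∀ (Q : Ideal A) [Q.IsPrime], Q ≠ IsLocalRing.maximalIdeal A → ∀ V : Submodule A M, V.FG → ∃ s ∈ Q.primeCompl, s ∈ HHJI V)
    (y : ι → A) (hy : ∀ i, y i ∈ IsLocalRing.maximalIdeal A) : HHJ (M := M) y := by
  intro V hV l
  have h1 : y l ∈ (HHJI V).radical := by
    rw [Ideal.radical_eq_sInf, Ideal.mem_sInf]
    rintro Q ⟨hQ, hQp⟩
    by_cases hQm : Q = IsLocalRing.maximalIdeal A
    · rw [hQm]; exact hy l
    · obtain ⟨s, hs, hs'⟩ := h Q hQm V hV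
      exact absurd (hQ hs') hs
  obtain ⟨N, T, hT⟩ := h1
  refine ⟨N, T.length, LinearMap.pi fun i => (T.get i).1, 
    Fintype.linearCombination A fun i => (T.get i).2, fun v => ?_⟩
  rw [← hT v, Fintype.linearCombination_apply]
  rw [← List.sum_ofFn]
  congr 1
  conv_rhs => rw [← List.ofFn_get T, List.map_ofFn]
  rfl

theorem hh_main (p : ℕ) [Fact p.Prime] {L : Type} [Field L] [IsAlgClosed L] [CharP L p] (n : ℕ) :
    ∀ (A : Type) [CommRing A] [IsLocalRing A] [IsNoetherianRing A] [Algebra A L],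
    Function.Injective (algebraMap A L) → ringKrullDim A < n →
    (∃ N, ∀ (K : Type) [AddCommGroup K] [Module A K], HHFD A N K) →
    Module.Flat A (integralClosure A L) := by
  induction n with
  | zero =>
    intro A _ _ _ _ _ h
    exact absurd (ringKrullDim_nonneg_of_nontrivial (R := A)) (not_le.mpr h)
  | succ n ih =>
    intro A _ _ _ _ hinj hdim hgfd
    obtain ⟨N, hN⟩ := hgfd
    have hJI : ∀ (Q : Ideal A) [Q.IsPrime], Q ≠ IsLocalRing.maximalIdeal A →
        ∀ V : Submodule A (integralClosure A L), V.FG → ∃ s ∈ Q.primeCompl, s ∈ HHJI V := by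
      intro Q _ hQ V hV
      have hu : ∀ s : Q.primeCompl, IsUnit (algebraMap A L s) := by
        rintro ⟨s, hs⟩
        refine isUnit_iff_ne_zero.mpr fun h => hs ?_
        rw [(injective_iff_map_eq_zero _).mp hinj s h]
        exact zero_mem _
      let B := Localization.AtPrime Q
      letI : Algebra B L := (IsLocalization.lift (M := Q.primeCompl) (S := B) hu).toAlgebra
      haveI : IsScalarTower A B L := IsScalarTower.of_algebraMap_eq fun x =>
        (IsLocalization.lift_eq (M := Q.primeCompl) (S := B) hu x).symm
      haveI : IsNoetherianRing B := IsLocalization.isNoetherianRing Q.primeCompl B inferInstance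
      have hinjB : Function.Injective (algebraMap B L) := by
        refine (IsLocalization.lift_injective_iff (M := Q.primeCompl) (S := B) hu).mpr fun x y => ?_
        rw [hinj.eq_iff]
        refine ⟨fun h => ?_, fun h => by rw [h]⟩
        obtain ⟨c, hc⟩ := (IsLocalization.eq_iff_exists Q.primeCompl B).mp h
        apply hinj
        have := congrArg (algebraMap A L) hc
        rw [map_mul, map_mul] at this
        exact (hu c).mul_left_cancel this
      have hlt : Q < IsLocalRing.maximalIdeal A :=
        lt_of_le_of_ne (IsLocalRing.le_maximalIdeal (Ideal.IsPrime.ne_top ‹_›)) hQ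
      have hdB : ringKrullDim B < n := by
        rw [IsLocalization.AtPrime.ringKrullDim_eq_height Q B]
        rw [← IsLocalRing.maximalIdeal_height_eq_ringKrullDim] at hdim
        have h1 := Ideal.height_strict_mono_of_isPrime hlt
        have h2 : (IsLocalRing.maximalIdeal A).height < ((n + 1 : ℕ) : ℕ∞) := by exact_mod_cast hdim
        have h3 : Q.height < (n : ℕ∞) := by
          refine lt_of_lt_of_le h1 ?_
          exact ENat.lt_add_one_iff (ENat.natCast_ne_top n) |>.mp (by exact_mod_cast h2)
        exact_mod_cast h3
      haveI := ih B hinjB hdB ⟨N, fun K _ _ => hh_gfd_loc Q.primeCompl N hN K⟩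
      exact hh_J_of_local B Q.primeCompl V hV
    have hJ : ∀ (ι : Type) (y : ι → A), (∀ i, y i ∈ IsLocalRing.maximalIdeal A) →
      HHJ (M := integralClosure A L) y := fun ι y hy => hh_J_of_JI hJI y hy
    obtain ⟨ys, hym, hyr, e, he⟩ := hh_exists_max (A := A)
    refine hh_lemFlat ys hyr e he N _ (hN _) (hh_LF_of_J fun a ha => hJ Unit _ fun _ => ha) ?_
    have hof : List.ofFn ys.get = ys := List.ofFn_get ys
    rw [← hof]
    have hym' : ∀ i, ys.get i ∈ IsLocalRing.maximalIdeal A := fun i => hym _ (List.get_mem ys i)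
    refine hh_wr_of_claim ys.get fun S j hj r hr => ?_
    haveI : CharP (integralClosure A L) p := 
      (algebraMap (integralClosure A L) L).charP (FaithfulSMul.algebraMap_injective (integralClosure A L) L) p
    refine hh_claim (L := L) p ?_ ?_ S.card S rfl ys.get (hh_PR _ hym' (by rw [hof]; exact hyr))
      (hJ _ _ hym') j hj r hr
    · intro a b hab
      exact hinj (congrArg Subtype.val hab)
    · intro f hf hd
      obtain ⟨t, ht⟩ := IsAlgClosed.exists_root (f.map (algebraMap (integralClosure A L) L)) (by
        rw [hf.degree_map, Polynomial.degree_eq_natDegree hf.ne_zero]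
        exact_mod_cast hd)
      have hti : IsIntegral (integralClosure A L) t := ⟨f, hf, by
        rw [Polynomial.IsRoot, Polynomial.eval_map] at ht; exact ht⟩
      have hti' : IsIntegral A t := isIntegral_trans t hti
      refine ⟨⟨t, hti'⟩, ?_⟩
      apply Subtype.ext
      rw [Polynomial.IsRoot, Polynomial.eval_map] at ht
      have h6 := Polynomial.hom_eval₂ f (RingHom.id _) (algebraMap (integralClosure A L) L) ⟨t, hti'⟩
      rw [RingHom.comp_id] at h6
      exact h6.trans ht

end HHPartH

section HHPartI
open TensorProduct RingTheory.Sequence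

/-- vanishing of first Tor -/
def HHT (A : Type) [CommRing A] (N K : Type) [AddCommGroup N] [Module A N] [AddCommGroup K] [Module A K] : Prop :=
  ∀ (F K' : Type) [AddCommGroup F] [Module A F] [AddCommGroup K'] [Module A K'] [Module.Flat A F]
    (f : K' →ₗ[A] F) (g : F →ₗ[A] K), Function.Injective f → Function.Exact f g →
    Function.Surjective g → Function.Injective (f.lTensor N)

theorem HHT.shift {A Z G N K' F K : Type} [CommRing A] [AddCommGroup Z] [AddCommGroup G] [AddCommGroup N]
    [AddCommGroup K'] [AddCommGroup F] [AddCommGroup K] [Module A Z] [Module A G] [Module A N]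
    [Module A K'] [Module A F] [Module A K] [Module.Flat A G] [Module.Flat A F]
    (i : Z →ₗ[A] G) (q : G →ₗ[A] N) (hi : Function.Injective i) (hiq : Function.Exact i q)
    (hq : Function.Surjective q)
    (f : K' →ₗ[A] F) (g : F →ₗ[A] K) (hf : Function.Injective f) (hfg : Function.Exact f g)
    (hg : Function.Surjective g) (h : HHT A Z K) : HHT A N K' := by
  intro F' K'' _ _ _ _ _ f' g' hf' hfg' hg'
  rw [injective_iff_map_eq_zero]
  intro τ hτ
  obtain ⟨ζ, h1, h2⟩ := hh_snake i q hiq hq f' g' hf' hfg' hg' τ hτ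
  have h3 : i.rTensor F (f.lTensor Z ζ) = 0 := by
    have : i.rTensor F (f.lTensor Z ζ) = f.lTensor G (i.rTensor K' ζ) := by
      rw [← LinearMap.comp_apply, ← LinearMap.comp_apply, LinearMap.rTensor_comp_lTensor,
        LinearMap.lTensor_comp_rTensor]
    rw [this, h1, map_zero]
  have h4 : f.lTensor Z ζ = 0 :=
    (injective_iff_map_eq_zero _).mp (Module.Flat.rTensor_preserves_injective_linearMap i hi) _ h3
  have h5 : ζ = 0 := (injective_iff_map_eq_zero _).mp (h F K' f g hf hfg hg) _ h4
  simpa using h2 1 (by rw [h5, smul_zero])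

section
variable {A : Type} [CommRing A] [IsLocalRing A] [IsNoetherianRing A]

theorem hh_exact_subtype {F K : Type} [AddCommGroup F] [Module A F] [AddCommGroup K] [Module A K] (g : F →ₗ[A] K) :
    Function.Exact (LinearMap.ker g).subtype g := g.exact_subtype_ker_map

theorem hh_free_of_wr (X : List A) (hX : Ideal.ofList X = IsLocalRing.maximalIdeal A)
    (N : Type) [AddCommGroup N] [Module A N] [Module.Finite A N] (h : IsWeaklyRegular N X) : Module.Free A N := by
  obtain ⟨n, g, hg⟩ := Module.Finite.exists_fin' A N
  refine Module.free_of_lTensor_residueField_injective (LinearMap.ker g).subtype g hg (hh_exact_subtype g) ?_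
  have := hh_quot_inj _ g (Submodule.subtype_injective _) (hh_exact_subtype g) hg X h
  rw [hX] at this
  exact this

theorem hh_FD_of_P (X : List A) (hX : IsWeaklyRegular A X) (j : ℕ) : ∀ (K : Type) [AddCommGroup K] [Module A K],
    (∀ (N : Type) [AddCommGroup N] [Module A N] [Module.Finite A N], IsWeaklyRegular N (X.take j) → HHT A N K) →
    HHFD A j K := by
  induction j with
  | zero =>
    intro K _ _ h
    let g := Finsupp.linearCombination A (id : K → K)
    have hg : Function.Surjective g := Finsupp.linearCombination_id_surjective A K
    refine @hh_flat_of_ker A _ _ _ (LinearMap.ker g) (K →₀ A) K _ _ _ _ _ _ _ (LinearMap.ker g).subtype g (hh_exact_subtype g) hg fun I => ?_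
    exact h (A ⧸ I) (by simp) _ _ _ g (Submodule.subtype_injective _) (hh_exact_subtype g) hg
  | succ j ih =>
    intro K _ _ h
    let g := Finsupp.linearCombination A (id : K → K)
    have hg : Function.Surjective g := Finsupp.linearCombination_id_surjective A K
    refine ⟨K →₀ A, LinearMap.ker g, _, _, _, _, (LinearMap.ker g).subtype, g, inferInstance,
      Submodule.subtype_injective _, hh_exact_subtype g, hg, ih _ fun N _ _ _ hN => ?_⟩
    obtain ⟨n, q, hq⟩ := Module.Finite.exists_fin' A N
    refine HHT.shift (LinearMap.ker q).subtype q (Submodule.subtype_injective _) (hh_exact_subtype q) hq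
      (LinearMap.ker g).subtype g (Submodule.subtype_injective _) (hh_exact_subtype g) hg (h _ ?_)
    rw [List.take_add_one]
    refine hh_syz X[j]?.toList (by cases X[j]? <;> simp) (X.take j) _ _ _ (LinearMap.ker q).subtype q 
      (Submodule.subtype_injective _) (hh_exact_subtype q) hq hN (hh_reg_flat _ ?_)
    rw [← List.take_add_one]
    have := hX
    rw [← List.take_append_drop (j+1) X, isWeaklyRegular_append_iff] at this
    exact this.1

theorem hh_gfd (X : List A) (hX : IsWeaklyRegular A X) (hm : Ideal.ofList X = IsLocalRing.maximalIdeal A)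
    (K : Type) [AddCommGroup K] [Module A K] : HHFD A X.length K := by
  refine hh_FD_of_P X hX _ K fun N _ _ _ hN => ?_
  rw [List.take_length] at hN
  haveI := hh_free_of_wr X hm N hN
  intro F K' _ _ _ _ _ f g hf _ _
  exact Module.Flat.lTensor_preserves_injective_linearMap f hf
end

end HHPartI

section HHPartJ
open Polynomial

theorem hh_section_step {B k : Type} [CommRing B] [Field k] (π : B →+* k)
    (p : ℕ) [Fact p.Prime] [CharP k p] (S : Subring B) (hS : ∀ b ∈ S, π b = 0 → b = 0)
    (hF : ∀ b : B, b ^ p ∈ S) (hπ : Function.Surjective π) (b : B) (hb : ∀ s ∈ S, π s ≠ π b) :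
    ∃ S' : Subring B, S ≤ S' ∧ b ∈ S' ∧ ∀ b ∈ S', π b = 0 → b = 0 := by
  have hp : p.Prime := Fact.out
  haveI : ExpChar k p := ExpChar.prime hp
  let k0 : Subfield k :=
    { S.map π with
      inv_mem' := by
        rintro _ ⟨s, hs, rfl⟩
        by_cases h0 : π s = 0
        · change (π s)⁻¹ ∈ S.map π
          rw [h0, inv_zero]; exact zero_mem _
        obtain ⟨u, hu⟩ := hπ (π s)⁻¹
        refine ⟨s ^ (p - 1) * u ^ p, S.mul_mem (S.pow_mem hs _) (hF u), ?_⟩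
        rw [map_mul, map_pow, map_pow, hu]
        have : (π s) ^ p = (π s) ^ (p - 1) * π s := by
          rw [← pow_succ, Nat.sub_add_cancel hp.one_le]
        have h1 : (π s)^(p-1) ≠ 0 := pow_ne_zero _ h0
        rw [inv_pow, this]
        field_simp }
  have hk0 : ∀ c : k0, ∃ s ∈ S, π s = c := fun c => c.2
  let ρ : S →+* k0 := (π.comp S.subtype).codRestrict k0 fun s => ⟨s, s.2, rfl⟩
  have hρ : Function.Injective ρ := by
    rw [injective_iff_map_eq_zero]
    intro s hs
    exact Subtype.ext (hS s s.2 (congrArg Subtype.val hs))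
  haveI : Nontrivial S := ρ.domain_nontrivial
  let φ : S[X] →+* B := eval₂RingHom S.subtype b
  refine ⟨φ.range, ?_, ⟨X, by simp [φ]⟩, ?_⟩
  · intro s hs
    exact ⟨C ⟨s, hs⟩, by simp [φ]⟩
  rintro _ ⟨f, rfl⟩ hf
  let g : S[X] := X ^ p - C ⟨b ^ p, hF b⟩
  have hg : g.Monic := monic_X_pow_sub_C _ hp.ne_zero
  have hgb : φ g = 0 := by simp [φ, g]
  have hfr : φ f = φ (f %ₘ g) := by
    conv_lhs => rw [← modByMonic_add_div f g]
    rw [map_add, map_mul, hgb, zero_mul, add_zero]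
  rw [hfr] at hf ⊢
  set r := f %ₘ g with hr
  have hrdeg : r.degree < p := by
    have := degree_modByMonic_lt f hg
    rwa [degree_X_pow_sub_C hp.pos] at this
  suffices h : r = 0 by rw [h, map_zero]
  have hev : ∀ q : S[X], π (φ q) = aeval (π b) (q.map ρ) := by
    intro q
    rw [aeval_def, eval₂_map]
    change π (eval₂ _ _ _) = _
    rw [hom_eval₂]
    rfl
  have hirr : Irreducible (X ^ p - C (ρ ⟨b ^ p, hF b⟩)) := by
    refine X_pow_sub_C_irreducible_of_prime hp fun c hc => ?_
    obtain ⟨s, hs, hsc⟩ := hk0 c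
    have h1 : (π s) ^ p = (π b) ^ p := by
      rw [hsc]
      have := congrArg Subtype.val hc
      exact this.trans (map_pow π b p)
    exact hb s hs (frobenius_inj k p h1)
  have hmin := minpoly.eq_of_irreducible_of_monic hirr (x := π b) (by
    have := hev g
    rw [hgb, map_zero] at this
    rw [this]
    simp [g]) (monic_X_pow_sub_C _ hp.ne_zero)
  rw [hev] at hf
  have hdvd := minpoly.dvd k0 (π b) hf
  rw [← hmin] at hdvd
  have h2 : r.map ρ = 0 := by
    by_contra h0
    have := degree_le_of_dvd hdvd h0
    rw [degree_X_pow_sub_C hp.pos] at this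
    exact absurd (degree_map_le.trans_lt hrdeg) (not_lt.mpr this)
  exact (Polynomial.map_eq_zero_iff hρ).mp h2

theorem hh_section {B k : Type} [CommRing B] [Field k] (π : B →+* k)
    (p : ℕ) [Fact p.Prime] [CharP k p] [CharP B p] (hπ : Function.Surjective π)
    (hker : ∀ b, π b = 0 → b ^ 2 = 0) : ∃ s : k →+* B, ∀ a, π (s a) = a := by
  have hp : p.Prime := Fact.out
  haveI : ExpChar B p := ExpChar.prime hp
  let Z : Set (Subring B) := {S | (∀ b ∈ S, π b = 0 → b = 0) ∧ ∀ b : B, b ^ p ∈ S}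
  have h0 : (frobenius B p).range ∈ Z := by
    refine ⟨?_, fun b => ⟨b, rfl⟩⟩
    rintro _ ⟨b, rfl⟩ hb
    rw [frobenius_def, map_pow] at hb
    have h1 := hker b (pow_eq_zero_iff hp.ne_zero |>.mp hb)
    rw [frobenius_def, ← Nat.sub_add_cancel hp.two_le, pow_add, h1, mul_zero]
  obtain ⟨S, -, hS⟩ := zorn_le_nonempty₀ Z (by
    intro c hc hch y hy
    have hmem := fun x => Subring.mem_sSup_of_directedOn (x := x) ⟨y, hy⟩ hch.directedOn
    refine ⟨sSup c, ⟨?_, ?_⟩, fun z hz => le_sSup hz⟩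
    · intro b hb
      obtain ⟨s, hs, hbs⟩ := (hmem b).mp hb
      exact (hc hs).1 b hbs
    · intro b
      exact (hmem _).mpr ⟨y, hy, (hc hy).2 b⟩) _ h0
  have hsurj : ∀ a : k, ∃ s ∈ S, π s = a := by
    intro a
    obtain ⟨b, rfl⟩ := hπ a
    by_contra hcon
    push Not at hcon
    obtain ⟨S', h1, h2, h3⟩ := hh_section_step π p S hS.prop.1 hS.prop.2 hπ b hcon
    have h4 : S' ∈ Z := ⟨h3, fun b => h1 (hS.prop.2 b)⟩
    exact hcon b (hS.le_of_ge h4 h1 h2) rfl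
  let ρ : S →+* k := π.comp S.subtype
  have hρ : Function.Bijective ρ := by
    constructor
    · rw [injective_iff_map_eq_zero]
      intro s hs
      exact Subtype.ext (hS.prop.1 s s.2 hs)
    · intro a
      obtain ⟨s, hs, h⟩ := hsurj a
      exact ⟨⟨s, hs⟩, h⟩
  refine ⟨S.subtype.comp (RingEquiv.ofBijective ρ hρ).symm.toRingHom, fun a => ?_⟩
  exact (RingEquiv.ofBijective ρ hρ).apply_symm_apply a

theorem hh_fsmooth {k : Type} [Field k] (p : ℕ) [Fact p.Prime] [Algebra (ZMod p) k] [CharP k p] :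
    Algebra.FormallySmooth (ZMod p) k := by
  refine .of_comp_surjective fun B _ _ I hI f => ?_
  let P : Subring (B × k) := RingHom.eqLocus ((Ideal.Quotient.mk I).comp (RingHom.fst B k))
    (f.toRingHom.comp (RingHom.snd B k))
  let π : P →+* k := (RingHom.snd B k).comp P.subtype
  have hπ : Function.Surjective π := by
    intro a
    obtain ⟨b, hb⟩ := Ideal.Quotient.mk_surjective (f a)
    exact ⟨⟨(b, a), hb⟩, rfl⟩
  haveI : Nontrivial P := π.domain_nontrivial
  haveI : CharP P p := by
    refine (CharP.charP_iff_prime_eq_zero Fact.out).mpr ?_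
    apply Subtype.ext
    have h1 : (p : B) = 0 := by
      rw [← map_natCast (algebraMap (ZMod p) B), ZMod.natCast_self, map_zero]
    have h2 : (p : k) = 0 := CharP.cast_eq_zero k p
    change ((p : B × k)) = 0
    ext
    · simpa using h1
    · simpa using h2
  obtain ⟨s, hs⟩ := hh_section π p hπ (by
    rintro ⟨⟨b, a⟩, hb⟩ (h : a = 0)
    subst h
    apply Subtype.ext
    have h1 : Ideal.Quotient.mk I b = f 0 := hb
    rw [map_zero, Ideal.Quotient.eq_zero_iff_mem] at h1
    have h2 : b ^ 2 ∈ I ^ 2 := Ideal.pow_mem_pow h1 2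
    rw [hI, Ideal.mem_bot] at h2
    change ((b, 0) : B × k) ^ 2 = 0
    rw [Prod.pow_mk, h2]
    simp)
  let g : k →+* B := (RingHom.fst B k).comp (P.subtype.comp s)
  refine ⟨{ g with commutes' := fun r => ?_ }, ?_⟩
  · exact RingHom.congr_fun (Subsingleton.elim (g.comp (algebraMap (ZMod p) k)) (algebraMap (ZMod p) B)) r
  · ext a
    have h1 := (s a).2
    change Ideal.Quotient.mk I (s a).1.1 = f (s a).1.2 at h1
    have h2 : (s a).1.2 = a := hs a
    rw [h2] at h1
    exact h1

theorem hh_coeff_field {R : Type} [CommRing R] [IsLocalRing R] [IsAdicComplete (IsLocalRing.maximalIdeal R) R]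
    (p : ℕ) [Fact p.Prime] [CharP R p] :
    ∃ s : IsLocalRing.ResidueField R →+* R, ∀ a, IsLocalRing.residue R (s a) = a := by
  letI : Algebra (ZMod p) R := ZMod.algebra R p
  haveI : CharP (IsLocalRing.ResidueField R) p := by
    refine (CharP.charP_iff_prime_eq_zero Fact.out).mpr ?_
    rw [← map_natCast (IsLocalRing.residue R), CharP.cast_eq_zero, map_zero]
  haveI : Algebra.FormallySmooth (ZMod p) (IsLocalRing.ResidueField R) := hh_fsmooth p
  let f : IsLocalRing.ResidueField R →ₐ[ZMod p] R ⧸ IsLocalRing.maximalIdeal R :=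
    { (RingHom.id _ : IsLocalRing.ResidueField R →+* IsLocalRing.ResidueField R) with
      commutes' := fun r => RingHom.congr_fun (Subsingleton.elim
        (algebraMap (ZMod p) (IsLocalRing.ResidueField R))
        (algebraMap (ZMod p) (R ⧸ IsLocalRing.maximalIdeal R))) r }
  obtain ⟨g, hg⟩ := Algebra.FormallySmooth.exists_mkₐ_comp_eq_of_isAdicComplete f
  exact ⟨g, fun a => AlgHom.congr_fun hg a⟩

end HHPartJ

section HHPartK
open RingTheory.Sequence

section
variable {k : Type} [Field k] {d : ℕ}

theorem hh_coeff_X_mul (a : Fin d) (f : MvPowerSeries (Fin d) k) (m : Fin d →₀ ℕ) :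
    MvPowerSeries.coeff m (MvPowerSeries.X a * f) =
      if m a = 0 then 0 else MvPowerSeries.coeff (m - Finsupp.single a 1) f := by
  classical
  rw [MvPowerSeries.X, MvPowerSeries.coeff_monomial_mul, one_mul]
  by_cases h : m a = 0
  · rw [if_pos h, if_neg]
    rw [Finsupp.single_le_iff]; omega
  · rw [if_neg h, if_pos]
    rw [Finsupp.single_le_iff]; omega

theorem hh_dec (N : ℕ) (S : Finset (Fin d)) : ∀ f : MvPowerSeries (Fin d) k,
    (∀ m : Fin d →₀ ℕ, (∀ l ∈ S, m l = 0) → MvPowerSeries.coeff m f = 0) →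
    (∀ m : Fin d →₀ ℕ, m.degree < N + 1 → MvPowerSeries.coeff m f = 0) →
    ∃ g : Fin d → MvPowerSeries (Fin d) k, f = ∑ l ∈ S, MvPowerSeries.X l * g l ∧
      ∀ l, ∀ m : Fin d →₀ ℕ, m.degree < N → MvPowerSeries.coeff m (g l) = 0 := by
  classical
  induction S using Finset.induction_on with
  | empty =>
    intro f hf _
    refine ⟨fun _ => 0, ?_, fun l m _ => by simp⟩
    ext m
    simpa using hf m (by simp)
  | insert a S ha ih =>
    intro f hf hN
    let f0 : MvPowerSeries (Fin d) k := fun m => if m a = 0 then MvPowerSeries.coeff m f else 0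
    let f1 : MvPowerSeries (Fin d) k := fun m => MvPowerSeries.coeff (m + Finsupp.single a 1) f
    have hf0 : ∀ m, MvPowerSeries.coeff m f0 = if m a = 0 then MvPowerSeries.coeff m f else 0 := fun m => rfl
    have hf1 : ∀ m, MvPowerSeries.coeff m f1 = MvPowerSeries.coeff (m + Finsupp.single a 1) f := fun m => rfl
    obtain ⟨g, hg, hgN⟩ := ih f0 (by
      intro m hm
      rw [hf0]
      split_ifs with h
      · exact hf m (by simpa [h] using hm)
      · rfl) (by
      intro m hm
      rw [hf0]
      split_ifs with h
      · exact hN m hm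
      · rfl)
    refine ⟨Function.update g a f1, ?_, ?_⟩
    · rw [Finset.sum_insert ha, Function.update_self]
      rw [Finset.sum_congr rfl (g := fun l => MvPowerSeries.X l * g l) (by
        intro l hl
        rw [Function.update_of_ne (by rintro rfl; exact ha hl)]), ← hg]
      ext m
      rw [map_add, hh_coeff_X_mul, hf0]
      split_ifs with h
      · simp
      · rw [hf1, add_zero, tsub_add_cancel_of_le]
        rw [Finsupp.single_le_iff]
        omega
    · intro l m hm
      by_cases h : l = a
      · subst h
        rw [Function.update_self, hf1]
        apply hN
        simpa [map_add] using hm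
      · rw [Function.update_of_ne h]
        exact hgN l m hm

theorem hh_mem_iff (S : Finset (Fin d)) (f : MvPowerSeries (Fin d) k) :
    HHMem (fun i : Fin d => (MvPowerSeries.X i : MvPowerSeries (Fin d) k)) (fun _ => 1) S f ↔
    ∀ m : Fin d →₀ ℕ, (∀ l ∈ S, m l = 0) → MvPowerSeries.coeff m f = 0 := by
  constructor
  · rintro ⟨z, rfl⟩ m hm
    rw [map_sum]
    refine Finset.sum_eq_zero fun l hl => ?_
    rw [pow_one, smul_eq_mul, hh_coeff_X_mul, if_pos (hm l hl)]
  · intro h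
    obtain ⟨g, hg, -⟩ := hh_dec 0 S f h (by
      intro m hm
      have : m = 0 := by
        rw [← Finsupp.degree_eq_zero_iff]; omega
      subst this
      exact h 0 (by simp))
    exact ⟨g, by simpa using hg⟩

theorem hh_ps_wr : IsWeaklyRegular (MvPowerSeries (Fin d) k)
    (List.ofFn (fun i : Fin d => (MvPowerSeries.X i : MvPowerSeries (Fin d) k))) := by
  haveI : IsNoetherianRing (MvPowerSeries (Fin d) k) := MvPowerSeries.isNoetherianRing _
  refine hh_wr_of_claim _ fun S j hj r hr => ?_
  rw [hh_mem_iff] at hr ⊢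
  intro m hm
  have := hr (m + Finsupp.single j 1) (by
    intro l hl
    have : j ≠ l := by rintro rfl; exact hj hl
    simp [hm l hl, this])
  rw [smul_eq_mul, hh_coeff_X_mul, if_neg (by simp), add_tsub_cancel_right] at this
  exact this

theorem hh_ps_max_iff (f : MvPowerSeries (Fin d) k) :
    f ∈ IsLocalRing.maximalIdeal (MvPowerSeries (Fin d) k) ↔ MvPowerSeries.coeff 0 f = 0 := by
  rw [IsLocalRing.mem_maximalIdeal, mem_nonunits_iff, MvPowerSeries.isUnit_iff_constantCoeff, isUnit_iff_ne_zero,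
    not_not, MvPowerSeries.coeff_zero_eq_constantCoeff]

theorem hh_ps_max : Ideal.ofList (List.ofFn (fun i : Fin d => (MvPowerSeries.X i : MvPowerSeries (Fin d) k)))
    = IsLocalRing.maximalIdeal (MvPowerSeries (Fin d) k) := by
  ext f
  have := hh_mem_ofList (M := MvPowerSeries (Fin d) k) 
    (fun i : Fin d => (MvPowerSeries.X i : MvPowerSeries (Fin d) k)) (fun _ => 1) Finset.univ
    (List.ofFn (fun i : Fin d => (MvPowerSeries.X i : MvPowerSeries (Fin d) k))) (by simp [List.mem_ofFn]) f
  rw [smul_eq_mul, Ideal.mul_top, hh_mem_iff] at this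
  rw [this, hh_ps_max_iff]
  constructor
  · intro h; exact h 0 (by simp)
  · intro h m hm
    have : m = 0 := by ext i; simpa using hm i (Finset.mem_univ _)
    rw [this, h]

theorem hh_ps_dim : ringKrullDim (MvPowerSeries (Fin d) k) ≤ d := by
  haveI : IsNoetherianRing (MvPowerSeries (Fin d) k) := MvPowerSeries.isNoetherianRing _
  refine (ringKrullDim_le_spanFinrank_maximalIdeal _).trans ?_
  rw [← hh_ps_max, Ideal.ofList]
  have h : {r | r ∈ List.ofFn (fun i : Fin d => (MvPowerSeries.X i : MvPowerSeries (Fin d) k))}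
    = Set.range (fun i : Fin d => (MvPowerSeries.X i : MvPowerSeries (Fin d) k)) := by
    ext; simp [List.mem_ofFn]
  rw [h]
  have := Submodule.spanFinrank_span_le_ncard_of_finite (R := MvPowerSeries (Fin d) k) (Set.finite_range 
    (fun i : Fin d => (MvPowerSeries.X i : MvPowerSeries (Fin d) k)))
  have h2 : (Set.range (fun i : Fin d => (MvPowerSeries.X i : MvPowerSeries (Fin d) k))).ncard ≤ d := by
    rw [← Set.image_univ]
    refine (Set.ncard_image_le Set.finite_univ).trans ?_
    simp
  exact_mod_cast this.trans h2

theorem hh_ps_pow (N : ℕ) : ∀ f : MvPowerSeries (Fin d) k,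
    f ∈ IsLocalRing.maximalIdeal (MvPowerSeries (Fin d) k) ^ N ↔
    ∀ m : Fin d →₀ ℕ, m.degree < N → MvPowerSeries.coeff m f = 0 := by
  induction N with
  | zero => simp
  | succ N ih =>
    intro f
    constructor
    · intro h
      rw [pow_succ'] at h
      refine Submodule.mul_induction_on h ?_ ?_
      · intro a ha b hb m hm
        rw [ih] at hb
        rw [hh_ps_max_iff] at ha
        classical
        rw [MvPowerSeries.coeff_mul]
        refine Finset.sum_eq_zero ?_
        rintro ⟨u, v⟩ huv
        rw [Finset.HasAntidiagonal.mem_antidiagonal] at huv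
        simp only at huv ⊢
        by_cases hu : u = 0
        · rw [hu, ha, zero_mul]
        · rw [hb v, mul_zero]
          have : u.degree ≠ 0 := by rwa [Ne, Finsupp.degree_eq_zero_iff]
          rw [← huv, map_add] at hm
          omega
      · intro a b ha hb m hm
        rw [map_add, ha m hm, hb m hm, add_zero]
    · intro h
      obtain ⟨g, hg, hg2⟩ := hh_dec N Finset.univ f (by
        intro m hm
        have : m = 0 := by ext i; simpa using hm i (Finset.mem_univ _)
        exact h m (by simp [this])) h
      rw [hg, pow_succ']
      refine Ideal.sum_mem _ fun l _ => Ideal.mul_mem_mul ?_ ((ih _).mpr (hg2 l))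
      rw [hh_ps_max_iff]
      simp

theorem hh_ps_prec (r : ℕ) : IsPrecomplete (IsLocalRing.maximalIdeal (MvPowerSeries (Fin d) k))
    (Fin r → MvPowerSeries (Fin d) k) := by
  have key : ∀ (N : ℕ) (v : Fin r → MvPowerSeries (Fin d) k),
      v ∈ ((IsLocalRing.maximalIdeal (MvPowerSeries (Fin d) k)) ^ N • ⊤ :
        Submodule (MvPowerSeries (Fin d) k) (Fin r → MvPowerSeries (Fin d) k)) ↔
      ∀ i, v i ∈ (IsLocalRing.maximalIdeal (MvPowerSeries (Fin d) k)) ^ N := by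
    intro N v
    constructor
    · intro h i
      refine Submodule.smul_induction_on h ?_ ?_
      · intro a ha b _
        exact Ideal.mul_mem_right _ _ ha
      · intro a b ha hb
        exact Ideal.add_mem _ ha hb
    · intro h
      classical
      have : v = ∑ i, v i • (Pi.single i 1 : Fin r → MvPowerSeries (Fin d) k) := by
        rw [← pi_eq_sum_univ']
      rw [this]
      exact Submodule.sum_mem _ fun i _ => Submodule.smul_mem_smul (h i) trivial
  refine ⟨fun f hf => ?_⟩
  let g : Fin r → MvPowerSeries (Fin d) k := fun i m => MvPowerSeries.coeff m (f (m.degree + 1) i)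
  have hgc : ∀ i m, MvPowerSeries.coeff m (g i) = MvPowerSeries.coeff m (f (m.degree + 1) i) := fun _ _ => rfl
  refine ⟨g, fun n => ?_⟩
  rw [SModEq.sub_mem, key]
  intro i
  rw [hh_ps_pow]
  intro m hm
  have h1 := hf (m := m.degree + 1) (n := n) (by omega)
  rw [SModEq.sub_mem, key] at h1
  have h2 := (hh_ps_pow _ _).mp (h1 i) m (by omega)
  rw [Pi.sub_apply, map_sub, sub_eq_zero] at h2 ⊢
  rw [hgc, h2]
end

end HHPartK

section HHPartL
theorem hh_evalhom {R k : Type} [CommRing R] [IsLocalRing R] [IsAdicComplete (IsLocalRing.maximalIdeal R) R]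
    [Field k] (s : k →+* R) {d : ℕ} (x : Fin d → R) (hx : ∀ i, x i ∈ IsLocalRing.maximalIdeal R) :
    ∃ Φ : MvPowerSeries (Fin d) k →+* R, (∀ i, Φ (MvPowerSeries.X i) = x i) ∧
      ∀ a, Φ (MvPowerSeries.C a) = s a := by
  letI : WithIdeal R := ⟨IsLocalRing.maximalIdeal R⟩
  have hadic : IsAdic (IsLocalRing.maximalIdeal R) := rfl
  have hc := (hadic.isAdicComplete_iff).mp inferInstance
  haveI := hc.1
  haveI := hc.2
  letI : UniformSpace k := ⊥
  haveI : DiscreteTopology k := ⟨rfl⟩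
  have hs : Continuous s := continuous_of_discreteTopology
  have ha : MvPowerSeries.HasEval x := ⟨fun i => by
    refine (hadic.hasBasis_nhds_zero.tendsto_right_iff).mpr fun n _ => ?_
    refine Filter.eventually_atTop.mpr ⟨n, fun m hm => ?_⟩
    exact Ideal.pow_le_pow_right hm (Ideal.pow_mem_pow (hx i) m), by simp⟩
  refine ⟨MvPowerSeries.eval₂Hom hs ha, fun i => ?_, fun a => ?_⟩
  · rw [MvPowerSeries.coe_eval₂Hom, MvPowerSeries.eval₂_X]
  · rw [MvPowerSeries.coe_eval₂Hom, MvPowerSeries.eval₂_C]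

end HHPartL

section HHPartM
theorem hh_layer {A R : Type} [CommRing A] [CommRing R] [IsNoetherianRing R] [Algebra A R] (m : Ideal R)
    (hres : ∀ r : R, ∃ a : A, r - algebraMap A R a ∈ m) (J : Ideal R) :
    ∃ V : Submodule A R, V.FG ∧ ∀ r ∈ J, ∃ v ∈ V, r - v ∈ m * J := by
  obtain ⟨S, hS⟩ := IsNoetherian.noetherian J
  refine ⟨Submodule.span A (S : Set R), ⟨S, rfl⟩, fun r hr => ?_⟩
  have hr' : r ∈ Submodule.span R (S : Set R) := by rwa [hS]
  induction hr' using Submodule.span_induction with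
  | mem x h => exact ⟨x, Submodule.subset_span h, by simp⟩
  | zero => exact ⟨0, zero_mem _, by simp⟩
  | add x y hx hy ihx ihy =>
    obtain ⟨v, hv, hv'⟩ := ihx (hS ▸ hx)
    obtain ⟨w, hw, hw'⟩ := ihy (hS ▸ hy)
    exact ⟨v + w, add_mem hv hw, by rw [add_sub_add_comm]; exact add_mem hv' hw'⟩
  | smul c x hx ih =>
    have hxJ : x ∈ J := hS ▸ hx
    obtain ⟨v, hv, hv'⟩ := ih hxJ
    obtain ⟨a, ha⟩ := hres c
    refine ⟨a • v, Submodule.smul_mem _ _ hv, ?_⟩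
    have : c • x - a • v = (c - algebraMap A R a) * x + algebraMap A R a * (x - v) := by
      rw [smul_eq_mul, Algebra.smul_def]; ring
    rw [this]
    exact add_mem (Ideal.mul_mem_mul ha hxJ) (Ideal.mul_mem_left _ _ hv')

theorem hh_layers {A R : Type} [CommRing A] [CommRing R] [IsNoetherianRing R] [Algebra A R] (m : Ideal R)
    (hres : ∀ r : R, ∃ a : A, r - algebraMap A R a ∈ m) (N : ℕ) :
    ∃ V : Submodule A R, V.FG ∧ ∀ r, ∃ v ∈ V, r - v ∈ m ^ N := by
  induction N with
  | zero => exact ⟨⊥, Submodule.fg_bot, fun r => ⟨0, zero_mem _, by simp⟩⟩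
  | succ N ih =>
    obtain ⟨V, hV, h⟩ := ih
    obtain ⟨W, hW, h'⟩ := hh_layer m hres (m ^ N)
    refine ⟨V ⊔ W, hV.sup hW, fun r => ?_⟩
    obtain ⟨v, hv, hv'⟩ := h r
    obtain ⟨w, hw, hw'⟩ := h' _ hv'
    refine ⟨v + w, Submodule.add_mem_sup hv hw, ?_⟩
    rw [pow_succ', ← sub_sub]
    exact hw'

theorem hh_finite {R k : Type} [CommRing R] [IsLocalRing R] [IsNoetherianRing R]
    [IsAdicComplete (IsLocalRing.maximalIdeal R) R]
    [Field k] {d : ℕ} [Algebra (MvPowerSeries (Fin d) k) R] (x : Fin d → R)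
    (hrad : (Ideal.span (Set.range x)).radical = IsLocalRing.maximalIdeal R)
    (hx : ∀ i, algebraMap (MvPowerSeries (Fin d) k) R (MvPowerSeries.X i) = x i)
    (hres : ∀ r : R, ∃ a : MvPowerSeries (Fin d) k, r - algebraMap _ R a ∈ IsLocalRing.maximalIdeal R) :
    Module.Finite (MvPowerSeries (Fin d) k) R := by
  have hxm : ∀ i, x i ∈ IsLocalRing.maximalIdeal R := fun i => by
    rw [← hrad]; exact Ideal.le_radical (Ideal.subset_span ⟨i, rfl⟩)
  obtain ⟨N, hN⟩ := Ideal.exists_radical_pow_le_of_fg (Ideal.span (Set.range x)) (IsNoetherian.noetherian _)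
  rw [hrad] at hN
  obtain ⟨V, hV, hVN⟩ := hh_layers (IsLocalRing.maximalIdeal R) hres N
  obtain ⟨r, w, hw⟩ := Submodule.fg_iff_exists_fin_generating_family.mp hV
  have hXm : ∀ i, (MvPowerSeries.X i : MvPowerSeries (Fin d) k) ∈ IsLocalRing.maximalIdeal (MvPowerSeries (Fin d) k) :=
    fun i => by rw [hh_ps_max_iff]; simp
  have hmap : (IsLocalRing.maximalIdeal (MvPowerSeries (Fin d) k)).map (algebraMap _ R) ≤
      IsLocalRing.maximalIdeal R := by
    rw [← hh_ps_max, Ideal.ofList, Ideal.map_span, Ideal.span_le]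
    rintro _ ⟨a, ha, rfl⟩
    obtain ⟨i, rfl⟩ := List.mem_ofFn.mp ha
    rw [hx]; exact hxm i
  haveI := hh_ps_prec (k := k) (d := d) r
  haveI : IsHausdorff (IsLocalRing.maximalIdeal (MvPowerSeries (Fin d) k)) R := by
    refine ⟨fun y hy => ?_⟩
    refine IsHausdorff.haus (I := IsLocalRing.maximalIdeal R) inferInstance y fun n => ?_
    have := hy n
    rw [SModEq.zero] at this ⊢
    rw [smul_eq_mul, Ideal.mul_top]
    refine Submodule.smul_induction_on this ?_ ?_
    · intro a ha b _
      rw [Algebra.smul_def]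
      refine Ideal.mul_mem_right _ _ (Ideal.pow_right_mono hmap n ?_)
      rw [← Ideal.map_pow]
      exact Ideal.mem_map_of_mem _ ha
    · intro a b ha hb
      exact add_mem ha hb
  let f : (Fin r → MvPowerSeries (Fin d) k) →ₗ[MvPowerSeries (Fin d) k] R := Fintype.linearCombination _ w
  have hf : LinearMap.range f = V := by
    rw [← hw]; exact Fintype.range_linearCombination _ _
  refine Module.Finite.of_surjective f (surjective_of_mkQ_comp_surjective
    (I := IsLocalRing.maximalIdeal (MvPowerSeries (Fin d) k)) ?_)
  intro q
  obtain ⟨y, rfl⟩ := Submodule.mkQ_surjective _ q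
  obtain ⟨v, hv, hv'⟩ := hVN y
  rw [← hf] at hv
  obtain ⟨u, rfl⟩ := hv
  refine ⟨u, ?_⟩
  rw [LinearMap.comp_apply, eq_comm, ← sub_eq_zero, ← map_sub, Submodule.mkQ_apply, Submodule.Quotient.mk_eq_zero]
  obtain ⟨c, hc⟩ := Ideal.mem_span_range_iff_exists_fun.mp (hN hv')
  rw [← hc]
  refine Submodule.sum_mem _ fun i _ => ?_
  rw [← hx, mul_comm, ← Algebra.smul_def]
  exact Submodule.smul_mem_smul (hXm i) trivial

theorem hh_inj {A R : Type} [CommRing A] [IsDomain A] [CommRing R] [Algebra A R] [Module.Finite A R] {d : ℕ}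
    (hA : ringKrullDim A ≤ d) (hR : ringKrullDim R = d) : Function.Injective (algebraMap A R) := by
  rw [injective_iff_map_eq_zero]
  intro f hf
  by_contra hf0
  have h1 := ringKrullDim_quotient_succ_le_of_nonZeroDivisor (mem_nonZeroDivisors_of_ne_zero hf0)
  rw [ringKrullDim_quotient] at h1
  let φ : PrimeSpectrum R → PrimeSpectrum.zeroLocus ((Ideal.span {f} : Ideal A) : Set A) := fun P =>
    ⟨PrimeSpectrum.comap (algebraMap A R) P, by
      rw [PrimeSpectrum.zeroLocus_span, PrimeSpectrum.mem_zeroLocus, Set.singleton_subset_iff]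
      change algebraMap A R f ∈ P.asIdeal
      rw [hf]; exact zero_mem _⟩
  have hφ : StrictMono φ := by
    intro P Q hPQ
    exact Ideal.IsIntegral.comap_lt_comap hPQ
  have h2 := Order.krullDim_le_of_strictMono φ hφ
  have h3 : ringKrullDim R + 1 ≤ d := (add_le_add_left h2 1).trans (h1.trans hA)
  rw [hR] at h3
  have : ((d + 1 : ℕ) : WithBot ℕ∞) ≤ (d : ℕ) := by exact_mod_cast h3
  have : d + 1 ≤ d := by exact_mod_cast this
  omega

end HHPartM

section HHPartN
open RingTheory.Sequence

theorem hh_plus {R L : Type} [CommRing R] [IsDomain R] [IsNoetherianRing R] [IsLocalRing R]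
    [IsAdicComplete (IsLocalRing.maximalIdeal R) R]
    (p : ℕ) [Fact p.Prime] [CharP R p] [Field L] [IsAlgClosed L] [Algebra R L]
    (hRL : Function.Injective (algebraMap R L))
    (d : ℕ) (x : Fin d → R) (hd : ringKrullDim R = d)
    (hrad : (Ideal.span (Set.range x)).radical = IsLocalRing.maximalIdeal R) :
    IsWeaklyRegular (integralClosure R L) (List.ofFn x) := by
  haveI : CharP L p := (CharP.of_ringHom_of_ne_zero (algebraMap R L) p (Fact.out : p.Prime).ne_zero)
  obtain ⟨s, hs⟩ := hh_coeff_field (R := R) p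
  have hxm : ∀ i, x i ∈ IsLocalRing.maximalIdeal R := fun i => by
    rw [← hrad]; exact Ideal.le_radical (Ideal.subset_span ⟨i, rfl⟩)
  obtain ⟨Φ, hΦX, hΦC⟩ := hh_evalhom s x hxm
  letI := Φ.toAlgebra
  haveI : Module.Finite (MvPowerSeries (Fin d) (IsLocalRing.ResidueField R)) R := by
    refine hh_finite x hrad hΦX fun r => ⟨MvPowerSeries.C (IsLocalRing.residue R r), ?_⟩
    change r - Φ _ ∈ _
    rw [hΦC, ← IsLocalRing.residue_eq_zero_iff, map_sub, hs, sub_self]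
  haveI : IsDomain (MvPowerSeries (Fin d) (IsLocalRing.ResidueField R)) := NoZeroDivisors.to_isDomain _
  have hinj : Function.Injective Φ := hh_inj hh_ps_dim hd
  letI : Algebra (MvPowerSeries (Fin d) (IsLocalRing.ResidueField R)) L := ((algebraMap R L).comp Φ).toAlgebra
  haveI : IsScalarTower (MvPowerSeries (Fin d) (IsLocalRing.ResidueField R)) R L := IsScalarTower.of_algebraMap_eq fun _ => rfl
  haveI : IsNoetherianRing (MvPowerSeries (Fin d) (IsLocalRing.ResidueField R)) := MvPowerSeries.isNoetherianRing _
  have hdim : ringKrullDim (MvPowerSeries (Fin d) (IsLocalRing.ResidueField R)) < (d + 1 : ℕ) := by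
    refine lt_of_le_of_lt hh_ps_dim ?_
    exact_mod_cast Nat.lt_succ_self d
  haveI := hh_main p (L := L) (d + 1) (MvPowerSeries (Fin d) (IsLocalRing.ResidueField R)) (hRL.comp hinj) hdim
    ⟨_, fun K _ _ => hh_gfd _ hh_ps_wr hh_ps_max K⟩
  have hw := hh_reg_flat (F := integralClosure (MvPowerSeries (Fin d) (IsLocalRing.ResidueField R)) L) _
    (hh_ps_wr (k := IsLocalRing.ResidueField R) (d := d))
  have hmem : ∀ z : L, z ∈ integralClosure (MvPowerSeries (Fin d) (IsLocalRing.ResidueField R)) L ↔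
      z ∈ integralClosure R L := fun z =>
    ⟨fun h => IsIntegral.tower_top h, fun h => isIntegral_trans z h⟩
  let e : integralClosure (MvPowerSeries (Fin d) (IsLocalRing.ResidueField R)) L ≃+ integralClosure R L :=
    { toFun := fun z => ⟨z.1, (hmem _).mp z.2⟩
      invFun := fun z => ⟨z.1, (hmem _).mpr z.2⟩
      left_inv := fun z => rfl
      right_inv := fun z => rfl
      map_add' := fun _ _ => rfl }
  refine (AddEquiv.isWeaklyRegular_congr (e := e) ?_).mp hw
  rw [List.forall₂_iff_get]
  refine ⟨by simp, fun i h1 h2 z => ?_⟩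
  simp only [List.get_eq_getElem, List.getElem_ofFn]
  apply Subtype.ext
  change _ • z.1 = _ • z.1
  rw [Algebra.smul_def, Algebra.smul_def, ← hΦX]
  rfl

end HHPartN

/-- For a `d`-dimensional complete local domain `R` of characteristic `p`
with a system of parameters `x₁, …, x_d`, and `T = R⁺(t_λ : λ ∈ Λ)`, the sequence
`x₁, …, xₙ` is a regular sequence on `T` for every `1 ≤ n ≤ d`. -/
theorem stmt12 (R : Type) [CommRing R] [IsDomain R] [IsNoetherianRing R] [IsLocalRing R]
    [IsAdicComplete (maximalIdeal R) R]
    (p : ℕ) [Fact p.Prime] [CharP R p]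
    [IsLocalRing (RPlus R)] (Λ : Type)
    [(Ideal.map (MvPolynomial.C (σ := Λ)) (maximalIdeal (RPlus R))).IsPrime]
    (d : ℕ) (x : Fin d → R) (hx : IsSOP R x)
    (n : ℕ) (hn1 : 1 ≤ n) (hnd : n ≤ d) :
    RingTheory.Sequence.IsRegular (TRing R Λ)
      (((List.ofFn x).take n).map ⇑(toT R Λ)) := by
  have hinj : Function.Injective (algebraMap R (AlgebraicClosure (FractionRing R))) := by
    rw [IsScalarTower.algebraMap_eq R (FractionRing R) (AlgebraicClosure (FractionRing R))]
    exact (algebraMap (FractionRing R) _).injective.comp (IsFractionRing.injective R (FractionRing R))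
  have hw := hh_plus (L := AlgebraicClosure (FractionRing R)) p hinj d x hx.1 hx.2
  have hw1 : RingTheory.Sequence.IsWeaklyRegular (RPlus R) ((List.ofFn x).map (algebraMap R (RPlus R))) :=
    (RingTheory.Sequence.isWeaklyRegular_map_algebraMap_iff (RPlus R) (RPlus R) (List.ofFn x)).mpr hw
  have hw2 := RingTheory.Sequence.IsWeaklyRegular.of_flat (S := MvPolynomial Λ (RPlus R)) hw1
  have hw3 := RingTheory.Sequence.IsWeaklyRegular.of_flat (S := TRing R Λ) hw2
  rw [List.map_map, List.map_map] at hw3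
  have hw4 : RingTheory.Sequence.IsWeaklyRegular (TRing R Λ) ((List.ofFn x).map ⇑(toT R Λ)) := hw3
  rw [← List.take_append_drop n (List.ofFn x), List.map_append,
    RingTheory.Sequence.isWeaklyRegular_append_iff] at hw4
  refine ⟨hw4.1, ?_⟩
  intro htop
  rw [smul_eq_mul, Ideal.mul_top] at htop
  have hle : Ideal.ofList (((List.ofFn x).take n).map ⇑(toT R Λ)) ≤ maximalIdeal (TRing R Λ) := by
    rw [Ideal.ofList, Ideal.span_le]
    rintro _ hb
    obtain ⟨a, ha, rfl⟩ := List.mem_map.mp hb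
    obtain ⟨i, rfl⟩ := List.mem_ofFn.mp (List.mem_of_mem_take ha)
    have h1 : x i ∈ maximalIdeal R := by
      rw [← hx.2]; exact Ideal.le_radical (Ideal.subset_span ⟨i, rfl⟩)
    have h2 : algebraMap R (RPlus R) (x i) ∈ maximalIdeal (RPlus R) := by
      haveI : IsLocalHom (algebraMap R (RPlus R)) :=
        RingHom.IsIntegral.isLocalHom (algebraMap_isIntegral_iff.mpr inferInstance)
          (fun a b hab => hinj (congrArg Subtype.val hab))
      rw [mem_maximalIdeal, mem_nonunits_iff] at h1 ⊢
      exact fun hu => h1 (isUnit_of_map_unit _ _ hu)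
    have h3 : MvPolynomial.C (σ := Λ) (algebraMap R (RPlus R) (x i)) ∈
        Ideal.map (MvPolynomial.C (σ := Λ)) (maximalIdeal (RPlus R)) := Ideal.mem_map_of_mem _ h2
    exact (IsLocalization.AtPrime.to_map_mem_maximal_iff (TRing R Λ)
      (Ideal.map (MvPolynomial.C (σ := Λ)) (maximalIdeal (RPlus R))) _).mpr h3
  rw [← htop] at hle
  exact (Ideal.IsPrime.ne_top inferInstance : maximalIdeal (TRing R Λ) ≠ ⊤) (top_le_iff.mp hle)
end

section
/- Let B be a commutative ring and let y, x_1, …, x_n be elements of B. If both x_1, …, x_n and y, x_1, …, x_n are regular sequences on B, then for each 0 ≤ k ≤ n the sequence x_1, …, x_k, y, x_{k+1}, …, x_n is a regular sequence on B. In particular, x_1, …, x_n, y is a regular sequence on B. -/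
open IsLocalRing TensorProduct
set_option synthInstance.maxHeartbeats 1000000
set_option maxHeartbeats 1000000

open RingTheory.Sequence Pointwise in
lemma swap_aux {R M : Type*} [CommRing R] [AddCommGroup M] [Module R M] (x y : R) (t : List R)
    (hx : IsSMulRegular M x) (h2 : IsWeaklyRegular M (y :: x :: t)) :
    IsWeaklyRegular M (x :: y :: t) := by
  rw [show ∀ x y (z : List R), x :: y :: z = [x, y] ++ z from fun _ _ _ => rfl,
    isWeaklyRegular_append_iff] at h2 ⊢
  have e : Ideal.ofList [y, x] = Ideal.ofList [x, y] :=
    congrArg Ideal.span <| Set.ext fun _ => (List.Perm.swap x y []).mem_iff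
  rw [(Submodule.quotEquivOfEq _ _ (congrArg₂ _ e rfl)).isWeaklyRegular_congr] at h2
  refine ⟨?_, h2.2⟩
  have h := h2.1
  rw [isWeaklyRegular_cons_iff, isWeaklyRegular_singleton_iff] at h ⊢
  refine ⟨hx, ?_⟩
  obtain ⟨hy, hxy⟩ := h
  rw [isSMulRegular_quotient_iff_mem_of_smul_mem] at hxy ⊢
  intro m hm
  obtain ⟨n, -, hn⟩ := Submodule.mem_smul_pointwise_iff_exists _ _ _ |>.1 hm
  have h3 : x • n ∈ y • (⊤ : Submodule R M) :=
    hn ▸ Submodule.smul_mem_pointwise_smul _ _ _ Submodule.mem_top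
  obtain ⟨n', -, rfl⟩ := Submodule.mem_smul_pointwise_iff_exists _ _ _ |>.1 (hxy n h3)
  rw [smul_comm] at hn
  rw [← hy hn]
  exact Submodule.smul_mem_pointwise_smul _ _ _ Submodule.mem_top

open RingTheory.Sequence in
lemma insert_aux {R : Type*} [CommRing R] (y : R) (xs : List R) :
    ∀ {M : Type*} [AddCommGroup M] [Module R M], IsWeaklyRegular M xs →
      IsWeaklyRegular M (y :: xs) → ∀ k : ℕ,
      IsWeaklyRegular M (xs.take k ++ y :: xs.drop k) := by
  induction xs with
  | nil => intro M _ _ h1 h2 k; simpa using h2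
  | cons x t ih =>
    intro M _ _ h1 h2 k
    cases k with
    | zero => simpa using h2
    | succ k =>
      rw [isWeaklyRegular_cons_iff] at h1
      have h3 := swap_aux x y t h1.1 h2
      rw [isWeaklyRegular_cons_iff] at h3
      rw [List.take_succ_cons, List.drop_succ_cons, List.cons_append, isWeaklyRegular_cons_iff]
      exact ⟨h1.1, ih h1.2 h3.2 k⟩

/-- If `x₁, …, xₙ` and `y, x₁, …, xₙ` are regular sequences on `B`, then so is
`x₁, …, x_k, y, x_{k+1}, …, xₙ` for each `0 ≤ k ≤ n` (in particular `x₁, …, xₙ, y`). -/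
theorem stmt13 (B : Type) [CommRing B] (y : B) (xs : List B)
    (h1 : RingTheory.Sequence.IsRegular B xs)
    (h2 : RingTheory.Sequence.IsRegular B (y :: xs))
    (k : ℕ) (hk : k ≤ xs.length) :
    RingTheory.Sequence.IsRegular B (xs.take k ++ y :: xs.drop k) := by
  refine ⟨insert_aux y xs h1.1 h2.1 k, ?_⟩
  have e : Ideal.ofList (xs.take k ++ y :: xs.drop k) = Ideal.ofList (y :: xs) := by
    refine congrArg Ideal.span <| Set.ext fun _ => List.Perm.mem_iff ?_
    refine List.perm_middle.trans ?_
    rw [List.take_append_drop]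
  rw [e]
  exact h2.2
end

section
/- Let (R, m) be a d-dimensional Noetherian local domain of prime characteristic p, let x_1, …, x_d be a system of parameters of R, and let T be a (commutative) R-algebra such that x_d is a nonzerodivisor on T/(x_1, …, x_{d−1})T. Then for every element y ∈ R and for each n ∈ {d − 1, d}, there exists a positive integer N_0 such that (x_1, …, x_n)T :_T y^∞ = (x_1, …, x_n)T :_T y^{N_0}. -/
open IsLocalRing TensorProduct
set_option synthInstance.maxHeartbeats 1000000
set_option maxHeartbeats 1000000

open IsLocalRing in
theorem aux_R {R : Type} [CommRing R] [IsNoetherianRing R] [IsLocalRing R]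
    (I : Ideal R) (x y : R) (hx : (I ⊔ Ideal.span {x}).radical = maximalIdeal R) :
    ∃ (k m : ℕ) (c : R), y ^ k * (x ^ m - c * y) ∈ I := by
  by_contra! hcon
  let S : Submonoid R :=
    { carrier := {z | ∃ (k m : ℕ) (c : R), z = y ^ k * (x ^ m - c * y)}
      one_mem' := ⟨0, 0, 0, by simp⟩
      mul_mem' := by
        rintro _ _ ⟨k, m, c, rfl⟩ ⟨k', m', c', rfl⟩
        exact ⟨k + k', m + m', c * x ^ m' + c' * x ^ m - c * c' * y, by ring⟩ }
  obtain ⟨P, hP, hIP, hdis⟩ := Ideal.exists_le_prime_disjoint I S (by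
    rw [Set.disjoint_left]
    rintro z hz ⟨k, m, c, rfl⟩
    exact hcon k m c hz)
  rw [Set.disjoint_left] at hdis
  have hy : y ∉ P := fun h => hdis h ⟨1, 0, 0, by simp⟩
  have hxm : x ∈ maximalIdeal R := by
    rw [← hx]
    exact Ideal.le_radical (le_sup_right (a := I) (Ideal.mem_span_singleton_self x))
  have hxr : x ∉ (P ⊔ Ideal.span {y}).radical := by
    rintro ⟨m, hm⟩
    obtain ⟨a, ha, b, hb, hab⟩ := Submodule.mem_sup.1 hm
    obtain ⟨c, rfl⟩ := Ideal.mem_span_singleton'.1 hb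
    exact hdis ha ⟨0, m, c, by rw [← hab]; ring⟩
  rw [Ideal.radical_eq_sInf, Submodule.mem_sInf] at hxr
  push Not at hxr
  obtain ⟨Q, ⟨hPQ, hQ⟩, hxQ⟩ := hxr
  have hyQ : y ∈ Q := hPQ (le_sup_right (a := P) (Ideal.mem_span_singleton_self y))
  have h0 : (⟨P, hP⟩ : PrimeSpectrum R) < ⟨Q, hQ⟩ :=
    lt_of_le_not_ge (show P ≤ Q from le_sup_left.trans hPQ) (fun h => hy (h hyQ))
  have h1 : (⟨Q, hQ⟩ : PrimeSpectrum R) < closedPoint R :=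
    lt_of_le_not_ge (show Q ≤ maximalIdeal R from IsLocalRing.le_maximalIdeal_of_isPrime Q)
      (fun h => hxQ (h hxm))
  obtain ⟨q, hxq, hPq, hqm⟩ := PrimeSpectrum.exist_mem_one_of_mem_maximal_ideal h0 h1 hxm
  refine hqm.not_ge ?_
  rw [← hx, q.2.radical_le_iff]
  refine sup_le (hIP.trans ?_) ((Ideal.span_singleton_le_iff_mem _).2 hxq)
  exact hPq.le

theorem aux_T {T : Type} [CommRing T] (K : Ideal T) (x y c : T) (k m : ℕ)
    (hx : ∀ u, x * u ∈ K → u ∈ K) (h : y ^ k * (x ^ m - c * y) ∈ K) (u : T) (j : ℕ)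
    (hu : u * y ^ (k + j) ∈ K) : u * y ^ k ∈ K := by
  have hxm : ∀ (m : ℕ) u, x ^ m * u ∈ K → u ∈ K := by
    intro m
    induction m with
    | zero => intro u hu; simpa using hu
    | succ m ih => intro u hu; exact ih u (hx _ (by rwa [pow_succ', mul_assoc] at hu))
  induction j with
  | zero => simpa using hu
  | succ j ih =>
    apply ih
    apply hxm m
    have := K.add_mem (K.mul_mem_left (y ^ j * u) h) (K.mul_mem_left c hu)
    convert this using 1
    ring

theorem aux_fin {T : Type} [CommRing T] (K : Ideal T) (y : T) (k : ℕ)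
    (h : ∀ (u : T) (j : ℕ), u * y ^ (k + j) ∈ K → u * y ^ k ∈ K) :
    ∃ N₀ : ℕ, 0 < N₀ ∧
      (⨆ N : ℕ, K.colon (Ideal.span {y ^ N})) = K.colon (Ideal.span {y ^ N₀}) := by
  refine ⟨k + 1, by omega, le_antisymm (iSup_le fun N u hu => ?_)
    (le_iSup (fun N : ℕ => K.colon (Ideal.span {y ^ N} : Ideal T)) (k + 1))⟩
  rw [Ideal.mem_colon_span_singleton] at hu ⊢
  have h1 : u * y ^ (k + N) ∈ K := by
    have := K.mul_mem_left (y ^ k) hu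
    convert this using 1
    ring
  have h2 := K.mul_mem_left y (h u N h1)
  convert h2 using 1
  ring

/-- For a `d`-dimensional local domain `R` of characteristic `p` with a system
of parameters `x₁, …, x_d` and an `R`-algebra `T` on which `x_d` is a nonzerodivisor modulo
`(x₁, …, x_{d-1})T`, the colon ideal `(x₁, …, xₙ)T : y^∞` stabilizes for `n ∈ {d-1, d}`. -/
theorem stmt15 (R : Type) [CommRing R] [IsDomain R] [IsNoetherianRing R] [IsLocalRing R]
    (p : ℕ) [Fact p.Prime] [CharP R p]
    (d : ℕ) (hd1 : 0 < d)
    (x : Fin d → R) (hx : IsSOP R x)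
    (T : Type) [CommRing T] [Algebra R T]
    (hnzd : ∀ u : T, algebraMap R T (x ⟨d - 1, by omega⟩) * u ∈
          Ideal.span (⇑(algebraMap R T) '' (x '' {i | (i : ℕ) < d - 1})) →
        u ∈ Ideal.span (⇑(algebraMap R T) '' (x '' {i | (i : ℕ) < d - 1})))
    (y : R) (n : ℕ) (hn : n = d - 1 ∨ n = d) :
    ∃ N₀ : ℕ, 0 < N₀ ∧
      (⨆ N : ℕ, (Ideal.span (⇑(algebraMap R T) '' (x '' {i | (i : ℕ) < n}))).colon
          (Ideal.span {algebraMap R T y ^ N})) =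
        (Ideal.span (⇑(algebraMap R T) '' (x '' {i | (i : ℕ) < n}))).colon
          (Ideal.span {algebraMap R T y ^ N₀}) := by
  obtain ⟨-, hrad⟩ := hx
  have hmap : ∀ n, ∀ z ∈ Ideal.span (x '' {i | (i : ℕ) < n}), algebraMap R T z ∈
      Ideal.span (⇑(algebraMap R T) '' (x '' {i | (i : ℕ) < n})) := by
    intro n z hz
    rw [← Ideal.map_span]
    exact Ideal.mem_map_of_mem _ hz
  rcases hn with rfl | rfl
  · have hsup : Ideal.span (Set.range x) =
        Ideal.span (x '' {i | (i : ℕ) < d - 1}) ⊔ Ideal.span {x ⟨d - 1, by omega⟩} := by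
      rw [← Ideal.span_union]
      congr 1
      ext z
      constructor
      · rintro ⟨i, rfl⟩
        by_cases hi : (i : ℕ) < d - 1
        · exact Or.inl ⟨i, hi, rfl⟩
        · right
          have : i = ⟨d - 1, by omega⟩ := Fin.ext (by have := i.2; simp; omega)
          rw [this]; rfl
      · rintro (⟨i, -, rfl⟩ | rfl)
        · exact ⟨i, rfl⟩
        · exact ⟨_, rfl⟩
    rw [hsup] at hrad
    obtain ⟨k, m, c, hc⟩ := aux_R _ _ y hrad
    have hc' := hmap _ _ hc
    simp only [map_mul, map_sub, map_pow] at hc'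
    exact aux_fin _ _ k fun u j hu => aux_T _ _ _ _ k m hnzd hc' u j hu
  · have huniv : x '' {i | (i : ℕ) < n} = Set.range x := by
      rw [← Set.image_univ]
      congr 1
      ext i
      simp
    by_cases hy : IsUnit y
    · refine aux_fin _ _ 0 fun u j hu => ?_
      rw [Ideal.mul_unit_mem_iff_mem _ ((hy.map (algebraMap R T)).pow _)] at hu
      simpa using hu
    · have hym : y ∈ maximalIdeal R := (mem_maximalIdeal y).2 hy
      rw [← hrad, ← huniv] at hym
      obtain ⟨k, hk⟩ := hym
      have hk' := hmap _ _ hk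
      rw [map_pow] at hk'
      exact aux_fin _ _ k fun u j _ => Ideal.mul_mem_left _ _ hk'
end
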